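/- Let x : ℕ → Fin 2 be nonrecurrent and pattern Sturmian, and suppose the orbit closure of x contains an infinite minimal subshift. Then there exist an irrational α, natural numbers k₁ ≠ k₂, and an interval I of 𝕋 = ℝ/ℤ which is either the open arc from k₁α to k₂α or the closed arc from k₁α to k₂α (mod 1), such that x(n) = 1_I(nα mod 1) for all n ∈ ℕ. -/

import Mathlib

open Set

abbrev Seq2 := ℕ → Fin 2

def patLang (x : Seq2) (τ : Finset ℕ) : Set ((s : τ) → Fin 2) :=
  {w | ∃ m : ℕ, ∀ s : τ, w s = x (m + (s : ℕ))}

noncomputable def pstar (x : Seq2) (n : ℕ) : ℕ :=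
  sSup {c : ℕ | ∃ τ : Finset ℕ, τ.card = n ∧ (patLang x τ).ncard = c}

def PatternSturmian (x : Seq2) : Prop := ∀ n : ℕ, 1 ≤ n → pstar x n = 2 * n

def Recurrent (x : Seq2) : Prop :=
  ∀ L : ℕ, ∃ M : ℕ, 1 ≤ M ∧ ∀ i < L, x i = x (M + i)

def shiftMap (x : Seq2) : Seq2 := fun n => x (n + 1)

def orbitClosure (x : Seq2) : Set Seq2 :=
  closure {y : Seq2 | ∃ m : ℕ, y = fun n => x (m + n)}

def IsSubshift (X : Set Seq2) : Prop :=
  X.Nonempty ∧ IsClosed X ∧ ∀ x ∈ X, shiftMap x ∈ X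

def MinimalSubshift (X : Set Seq2) : Prop :=
  IsSubshift X ∧
    ∀ Z ⊆ X, IsClosed Z → (∀ x ∈ Z, shiftMap x ∈ Z) → Z.Nonempty → Z = X

abbrev T1 := AddCircle (1 : ℝ)

/-!
Take a totally uniformly recurrent two-sided point `z` of the given minimal subshift. Every block
of `z` occurs arbitrarily late in `x`, so patterns of `z` count as patterns of `x`, and `z` inherits
the bound `p*(n) ≤ 2 n`.

If `z` is constant on no residue class, well-separated windows force the maximal number of patterns
already along `z`. The rigidity of these patterns yields a phase, and hence a limit `y` of shifts
of `z` that codes an irrational rotation with respect to an arc. Since the coding patterns exhaust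
the bound, every window of `x`, the initial ones included, must look like a window of the coding,
so `x` codes an orbit of the same rotation except when that orbit meets an endpoint of the arc.
Nonrecurrence forces both endpoints to be met, at times `k₁` and `k₂`, with the same value of `x`;
that value decides between the open and the closed arc.

If `z` is constant on some residue class, then modulo suitable numbers `t 0 ∣ t 1 ∣ …` it is
periodic off a single class, the hole, so that `z` has a Toeplitz structure. Counting three-letter
patterns shows that at most one position of `x` never settles to the periodic pattern, and that this
position falls into the holes. Hence the initial block of `x` reappears, against nonrecurrence.
-/

/-! ### Recurrence and pattern bounds -/

section Notions

variable {A B : Type*}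

/-- Every block of the two-sided sequence `y` occurs in `z`, i.e. `y` lies in the two-sided orbit
closure of `z`. -/
def OccursIn (y z : ℤ → A) : Prop :=
  ∀ R : ℤ, ∃ p : ℤ, ∀ i : ℤ, |i| ≤ R → z (p + i) = y i

/-- Every block of `z` occurs arbitrarily far to the right in `X`, i.e. `z` is a two-sided
`ω`-limit point of `X`. Only the values of `X` at nonnegative positions matter. -/
def OccursLateIn (z X : ℤ → A) : Prop :=
  ∀ R N : ℤ, ∃ m : ℤ, N ≤ m ∧ ∀ i : ℤ, |i| ≤ R → X (m + i) = z i

/-- Uniform recurrence along every progression: each central block of `z` reappears with bounded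
gaps at multiples of each `t > 0`. -/
def TotallyUniformlyRecurrent (z : ℤ → A) : Prop :=
  ∀ t : ℤ, 0 < t → ∀ R : ℤ, ∃ G : ℤ, 0 < G ∧ ∀ a : ℤ, ∃ g : ℤ, a ≤ g ∧ g ≤ a + G ∧ t ∣ g ∧
    ∀ i : ℤ, |i| ≤ R → z (i + g) = z i

/-- `z` is constant on no residue class, for any modulus. -/
def NoConstantClass (z : ℤ → A) : Prop :=
  ∀ t : ℤ, 0 < t → ∀ i : ℤ, ∃ j : ℤ, z (i + j * t) ≠ z i

/-- The bound `p*(n) ≤ 2 n` for a two-sided sequence, in the form in which it is used: a family of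
positions at which pairwise different patterns are seen through the window `τ` has at most
`2 |τ|` members. -/
def WindowBound (z : ℤ → A) : Prop :=
  ∀ (ι : Type) [Fintype ι] (f : ι → ℤ) (τ : Finset ℤ), τ.Nonempty →
    (Pairwise fun i j => ∃ s ∈ τ, z (f i + s) ≠ z (f j + s)) → Fintype.card ι ≤ 2 * τ.card

/-- The bound `p*(n) ≤ 2 n` for the one-sided sequence carried by the nonnegative positions of `X`:
a family of pairwise different patterns of `X` on the window `τ` has at most `2 |τ|` members. -/
def OneSidedWindowBound (X : ℤ → A) : Prop :=
  ∀ (ι : Type) [Fintype ι] (u : ι → ℤ → A) (τ : Finset ℤ), τ.Nonempty →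
    (∀ i, ∃ m : ℤ, ∀ s ∈ τ, 0 ≤ m + s ∧ X (m + s) = u i s) →
    (Pairwise fun i j => ∃ s ∈ τ, u i s ≠ u j s) → Fintype.card ι ≤ 2 * τ.card

/-- The initial block of length `L` of `X` never reappears to the right. -/
def InitialBlockUnique (X : ℤ → A) (L : ℤ) : Prop :=
  ∀ M : ℤ, 1 ≤ M → ∃ i : ℤ, 0 ≤ i ∧ i < L ∧ X i ≠ X (M + i)

theorem OccursLateIn.trans_occursIn {X y z : ℤ → A} (hzX : OccursLateIn z X)
    (hyz : OccursIn y z) : OccursLateIn y X := by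
  intro R N
  obtain ⟨p, hp⟩ := hyz R
  obtain ⟨m, hm, hmz⟩ := hzX (|p| + R) (N + |p|)
  refine ⟨m + p, by linarith [neg_abs_le p], fun i hi => ?_⟩
  rw [add_assoc, hmz (p + i) ((abs_add_le _ _).trans (by gcongr)), hp i hi]

theorem OccursLateIn.comp {X z : ℤ → A} (h : OccursLateIn z X) (f : A → B) :
    OccursLateIn (f ∘ z) (f ∘ X) := fun R N =>
  (h R N).imp fun _ hm => ⟨hm.1, fun i hi => congrArg f (hm.2 i hi)⟩

theorem TotallyUniformlyRecurrent.comp {z : ℤ → A} (h : TotallyUniformlyRecurrent z)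
    (f : A → B) : TotallyUniformlyRecurrent (f ∘ z) := fun t ht R =>
  (h t ht R).imp fun _ hG => ⟨hG.1, fun a => (hG.2 a).imp fun _ hg =>
    ⟨hg.1, hg.2.1, hg.2.2.1, fun i hi => congrArg f (hg.2.2.2 i hi)⟩⟩

theorem exists_forall_mem_abs_le {ι : Type*} (s : Finset ι) (f : ι → ℤ) :
    ∃ R : ℤ, 0 ≤ R ∧ ∀ i ∈ s, |f i| ≤ R :=
  ⟨∑ i ∈ s, |f i|, Finset.sum_nonneg fun _ _ => abs_nonneg _, fun _ hi =>
    Finset.single_le_sum (f := fun i => |f i|) (fun _ _ => abs_nonneg _) hi⟩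

theorem WindowBound.exists_agree {z : ℤ → A} (hz : WindowBound z) {ι : Type} [Fintype ι]
    {f : ι → ℤ} {τ : Finset ℤ} (hτ : τ.Nonempty)
    (hf : Pairwise fun i j => ∃ s ∈ τ, z (f i + s) ≠ z (f j + s))
    (hcard : 2 * τ.card ≤ Fintype.card ι) (p : ℤ) : ∃ i, ∀ s ∈ τ, z (p + s) = z (f i + s) := by
  by_contra! hne
  have := hz (Option ι) (fun o => o.elim p f) τ hτ (by
    rintro (_ | i) (_ | j) hij
    · exact (hij rfl).elim
    · exact hne j
    · exact (hne i).imp fun s hs => ⟨hs.1, hs.2.symm⟩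
    · exact hf fun h => hij (congrArg some h))
  rw [Fintype.card_option] at this
  omega

theorem OneSidedWindowBound.windowBound {X z : ℤ → A} (hX : OneSidedWindowBound X)
    (hz : OccursLateIn z X) : WindowBound z := by
  intro ι _ f τ hτ hf
  obtain ⟨R, -, hR⟩ := exists_forall_mem_abs_le (Finset.univ ×ˢ τ) fun q : ι × ℤ => f q.1 + q.2
  obtain ⟨m, hm, hmz⟩ := hz R R
  refine hX ι (fun i s => z (f i + s)) τ hτ (fun i => ⟨m + f i, fun s hs => ?_⟩) hf
  have his := hR (i, s) (Finset.mk_mem_product (Finset.mem_univ i) hs)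
  rw [add_assoc]
  exact ⟨by linarith [neg_abs_le (f i + s)], hmz _ his⟩

end Notions

section PatternComplexity

variable (x : Seq2)

theorem ncard_patLang_le_pstar (τ : Finset ℕ) : (patLang x τ).ncard ≤ pstar x τ.card := by
  refine le_csSup ⟨2 ^ τ.card, ?_⟩ ⟨τ, rfl, rfl⟩
  rintro _ ⟨σ, hσ, rfl⟩
  calc (patLang x σ).ncard ≤ (Set.univ : Set (σ → Fin 2)).ncard :=
        Set.ncard_le_ncard (Set.subset_univ _) (Set.toFinite _)
    _ = 2 ^ τ.card := by rw [Set.ncard_univ, Nat.card_eq_fintype_card]; simp [hσ]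

/-- The Boolean sequence carried by `x`, extended to negative positions by the value `x 0`. -/
def boolExt (m : ℤ) : Bool := finTwoEquiv (x m.toNat)

variable {x}

theorem oneSidedWindowBound_of_pstar_le (hx : ∀ n, 1 ≤ n → pstar x n ≤ 2 * n) :
    OneSidedWindowBound (boolExt x) := by
  intro ι _ u τ hτ hocc hu
  choose m hm using hocc
  set c := τ.min' hτ
  have hc : ∀ s ∈ τ, c ≤ s := τ.min'_le
  let τ' : Finset ℕ := τ.image fun s => (s - c).toNat
  have hcard : τ'.card = τ.card := Finset.card_image_of_injOn fun s hs t ht hst => by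
    have := hc s hs
    have := hc t ht
    omega
  let W : ι → (τ' → Fin 2) := fun i s => x ((m i + c).toNat + s)
  have hW : Function.Injective W := fun i j hij => by
    by_contra hne
    obtain ⟨s, hs, hus⟩ := hu hne
    have hWu : ∀ k, W k ⟨(s - c).toNat, Finset.mem_image_of_mem _ hs⟩ =
        finTwoEquiv.symm (u k s) := fun k => by
      rw [Equiv.eq_symm_apply, ← (hm k s hs).2, boolExt]
      have := (hm k c (τ.min'_mem hτ)).1
      have := hc s hs
      simp only [W]
      congr 3
      omega
    exact hus (finTwoEquiv.symm.injective ((hWu i).symm.trans ((congrFun hij _).trans (hWu j))))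
  calc Fintype.card ι = (Set.range W).ncard := by
        rw [← Set.image_univ, Set.ncard_image_of_injective _ hW, Set.ncard_univ,
          Nat.card_eq_fintype_card]
    _ ≤ (patLang x τ').ncard := Set.ncard_le_ncard
        (Set.range_subset_iff.2 fun i => ⟨_, fun _ => rfl⟩) (Set.toFinite _)
    _ ≤ pstar x τ.card := hcard ▸ ncard_patLang_le_pstar x τ'
    _ ≤ 2 * τ.card := hx _ hτ.card_pos

theorem exists_initialBlockUnique_of_not_recurrent (hx : ¬ Recurrent x) :
    ∃ L, InitialBlockUnique (boolExt x) L := by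
  simp only [Recurrent, not_forall, not_exists, not_and] at hx
  obtain ⟨L, hL⟩ := hx
  refine ⟨L, fun M hM => ?_⟩
  obtain ⟨i, hi, hne⟩ := hL M.toNat (by omega)
  refine ⟨i, by omega, by omega, fun h => hne (finTwoEquiv.injective ?_)⟩
  rwa [boolExt, boolExt, Int.toNat_natCast, show (M + i).toNat = M.toNat + i by omega] at h

end PatternComplexity

/-! ### Uniformly recurrent two-sided points -/

section Dynamics

open Filter Topology

variable {τ X : Type*} [AddMonoid τ] [TopologicalSpace τ] [TopologicalSpace X]

theorem subset_iUnion_preimage_flow_of_minimal (φ : Flow τ X) {K : Set X}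
    (hK : Minimal (fun K => IsClosed K ∧ K.Nonempty ∧ IsInvariant φ K) K)
    {w : X} (hw : w ∈ K) {U : Set X} (hU : IsOpen U) (hwU : w ∈ U) :
    K ⊆ ⋃ t, φ t ⁻¹' U := by
  by_contra hcov
  obtain ⟨v, hv, hvU⟩ := Set.not_subset.1 hcov
  have hsub : K ⊆ K \ ⋃ t, φ t ⁻¹' U := hK.2 ⟨?_, ⟨v, hv, hvU⟩, ?_⟩ Set.sdiff_subset
  · exact (hsub hw).2 (Set.mem_iUnion.2 ⟨0, by simpa using hwU⟩)
  · exact hK.1.1.sdiff (isOpen_iUnion fun t =>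
      hU.preimage (φ.continuous continuous_const continuous_id))
  · rintro a v ⟨hv, hvU⟩
    refine ⟨hK.1.2.2 a hv, fun h => hvU ?_⟩
    obtain ⟨t, ht⟩ := Set.mem_iUnion.1 h
    exact Set.mem_iUnion.2 ⟨t + a, by rwa [Set.mem_preimage, φ.map_add]⟩

variable [CompactSpace X]

theorem exists_minimal_isInvariant (φ : Flow τ X) {C : Set X} (hC : IsClosed C)
    (hne : C.Nonempty) (hinv : IsInvariant φ C) :
    ∃ K ⊆ C, Minimal (fun K => IsClosed K ∧ K.Nonempty ∧ IsInvariant φ K) K := by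
  refine zorn_superset_nonempty {K : Set X | IsClosed K ∧ K.Nonempty ∧ IsInvariant φ K}
    (fun c hc hchain hcne => ⟨⋂₀ c, ⟨?_, ?_, ?_⟩, fun s hs => Set.sInter_subset_of_mem hs⟩)
    C ⟨hC, hne, hinv⟩
  · exact isClosed_sInter fun s hs => (hc hs).1
  · have : Nonempty c := hcne.to_subtype
    exact IsCompact.nonempty_sInter_of_directed_nonempty_isCompact_isClosed
      (fun a ha b hb => (hchain.total ha hb).elim
        (fun h => ⟨a, ha, subset_rfl, h⟩) fun h => ⟨b, hb, h, subset_rfl⟩)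
      (fun s hs => (hc hs).2.1) (fun s hs => (hc hs).1.isCompact)
      (fun s hs => (hc hs).1)
  · exact fun a w hw s hs => (hc hs).2.2 a (hw s hs)

theorem exists_syndetic_return (φ : Flow τ X) {C : Set X} (hC : IsClosed C)
    (hne : C.Nonempty) (hinv : IsInvariant φ C) :
    ∃ w ∈ C, ∀ U : Set X, IsOpen U → w ∈ U → ∃ F : Finset τ, ∀ a, ∃ f ∈ F, φ (f + a) w ∈ U := by
  obtain ⟨K, hKC, hK⟩ := exists_minimal_isInvariant φ hC hne hinv
  obtain ⟨w, hw⟩ := hK.1.2.1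
  refine ⟨w, hKC hw, fun U hU hwU => ?_⟩
  obtain ⟨F, hF⟩ := hK.1.1.isCompact.elim_finite_subcover _
    (fun t => hU.preimage (φ.continuous continuous_const continuous_id))
    (subset_iUnion_preimage_flow_of_minimal φ hK hw hU hwU)
  refine ⟨F, fun a => ?_⟩
  obtain ⟨f, hf, hfU⟩ := Set.mem_iUnion₂.1 (hF (hK.1.2.2 a hw))
  exact ⟨f, hf, by rwa [φ.map_add]⟩

variable {A : Type*} [TopologicalSpace A]

/-- The shift on `A ^ ℤ` together with all finite clocks `ℤ / (t + 1)`. Recurrence of a point of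
this product is recurrence of its first coordinate along multiples of every `t + 1`. -/
def clockFlow (A : Type*) [TopologicalSpace A] :
    Flow ℤ ((ℤ → A) × ((t : ℕ) → ZMod (t + 1))) where
  toFun a w := (fun n => w.1 (n + a), w.2 + fun _ => (a : ZMod _))
  cont' := continuous_prod_of_discrete_left.2 fun a => by
    dsimp only [Function.uncurry]
    fun_prop
  map_add' a b w := by
    refine Prod.ext (funext fun n => ?_) (funext fun t => ?_)
    · simp only [add_assoc]
    · simp only [Pi.add_apply, Int.cast_add]; ring
  map_zero' w := by
    refine Prod.ext (funext fun n => ?_) (funext fun t => ?_) <;> simp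

theorem exists_totallyUniformlyRecurrent_mem [Finite A] [DiscreteTopology A] {C : Set (ℤ → A)}
    (hC : IsClosed C) (hne : C.Nonempty) (hinv : ∀ z ∈ C, ∀ a : ℤ, (fun n => z (n + a)) ∈ C) :
    ∃ z ∈ C, TotallyUniformlyRecurrent z := by
  obtain ⟨⟨z, c⟩, hz, hret⟩ := exists_syndetic_return (clockFlow A)
    (hC.preimage continuous_fst) (hne.preimage Prod.fst_surjective) fun a w hw => hinv _ hw a
  refine ⟨z, hz, fun t ht R => ?_⟩
  obtain ⟨t, rfl⟩ : ∃ t' : ℕ, t = t' + 1 := ⟨(t - 1).toNat, by omega⟩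
  let U : Set ((ℤ → A) × ((t : ℕ) → ZMod (t + 1))) :=
    {w | ∀ i ∈ Finset.Icc (-R) R, w.1 i = z i} ∩ {w | w.2 t = c t}
  have hU : IsOpen U := by
    refine IsOpen.inter ?_ ((isOpen_discrete {c t}).preimage (by fun_prop))
    simp only [Set.ofPred_forall]
    exact isOpen_biInter_finset fun i _ => (isOpen_discrete {z i}).preimage (by fun_prop)
  obtain ⟨F, hF⟩ := hret U hU ⟨fun _ _ => rfl, rfl⟩
  obtain ⟨B, hB0, hB⟩ := exists_forall_mem_abs_le F id
  refine ⟨2 * B + 1, by omega, fun a => ?_⟩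
  obtain ⟨f, hf, hfz, hfc⟩ := hF (a + B)
  have hfB : -B ≤ f ∧ f ≤ B := abs_le.1 (hB f hf)
  refine ⟨f + (a + B), by omega, by omega, ?_, fun i hi => ?_⟩
  · have : ((f + (a + B) : ℤ) : ZMod (t + 1)) = 0 := add_eq_left.1 hfc
    exact_mod_cast (ZMod.intCast_zmod_eq_zero_iff_dvd _ _).1 this
  · exact hfz i (Finset.mem_Icc.2 (abs_le.1 hi))

end Dynamics

section Subshift

open Filter Topology

/-- All right tails of the two-sided sequence `z` lie in `Y`: `z` is a point of the natural
extension of `Y`. -/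
def IsBilateralPoint (Y : Set Seq2) (z : ℤ → Fin 2) : Prop :=
  ∀ k : ℤ, (fun n : ℕ => z (k + n)) ∈ Y

variable {x : Seq2} {Y : Set Seq2} {z : ℤ → Fin 2}

theorem IsSubshift.tail_mem (hY : IsSubshift Y) (hx : x ∈ Y) (m : ℕ) :
    (fun n => x (m + n)) ∈ Y := by
  induction m with
  | zero => simpa using hx
  | succ m ih =>
    convert hY.2.2 _ ih using 1
    funext n
    simp only [shiftMap]
    congr 1
    omega

theorem IsSubshift.exists_isBilateralPoint (hY : IsSubshift Y) : ∃ z, IsBilateralPoint Y z := by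
  obtain ⟨y, hy⟩ := hY.1
  let f : ℕ → ℤ → Fin 2 := fun m n => y (m + n).toNat
  let F : Ultrafilter (ℤ → Fin 2) := (hyperfilter ℕ).map f
  refine ⟨F.lim, fun k => ?_⟩
  have hcont : Continuous fun (u : ℤ → Fin 2) (n : ℕ) => u (k + n) := by fun_prop
  have hlim : Tendsto (fun m (n : ℕ) => f m (k + n)) (hyperfilter ℕ : Filter ℕ)
      (𝓝 fun n => F.lim (k + n)) := (hcont.tendsto _).comp F.le_nhds_lim
  refine hY.2.1.mem_of_tendsto hlim (hyperfilter_le_cofinite (Nat.cofinite_eq_atTop ▸ ?_))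
  filter_upwards [eventually_ge_atTop k.natAbs] with m hm
  convert hY.tail_mem hy (m + k).toNat using 2 with n
  simp only [f]
  congr 1
  omega

theorem IsSubshift.exists_totallyUniformlyRecurrent (hY : IsSubshift Y) :
    ∃ z, IsBilateralPoint Y z ∧ TotallyUniformlyRecurrent z := by
  refine exists_totallyUniformlyRecurrent_mem (C := {z | IsBilateralPoint Y z}) ?_
    hY.exists_isBilateralPoint fun z hz a k => ?_
  · simp only [IsBilateralPoint, Set.ofPred_forall]
    exact isClosed_iInter fun k => hY.2.1.preimage (by fun_prop)
  · convert hz (k + a) using 3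
    ring

theorem IsBilateralPoint.occursLateIn (hz : IsBilateralPoint Y z) (hY : Y ⊆ orbitClosure x) :
    OccursLateIn z fun m => x m.toNat := by
  intro R N
  obtain ⟨s, hs⟩ : ∃ s, s = |R| + |N| := ⟨_, rfl⟩
  have := abs_nonneg R
  have := abs_nonneg N
  let S : Finset ℕ := Finset.range (2 * s + 1).toNat
  have hU : IsOpen {u : Seq2 | ∀ n ∈ S, u n = z (-s + n)} := by
    simp only [Set.ofPred_forall]
    exact isOpen_biInter_finset fun n _ => (isOpen_discrete {z (-s + n)}).preimage (by fun_prop)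
  obtain ⟨_, hu, m, rfl⟩ := mem_closure_iff.1 (hY (hz (-s))) _ hU fun n _ => rfl
  have hR := le_abs_self R
  have hN := le_abs_self N
  refine ⟨m + s, by omega, fun i hi => ?_⟩
  have hi' := abs_le.1 hi
  have := hu (i + s).toNat (Finset.mem_range.2 (by omega))
  rw [Int.toNat_of_nonneg (by omega), neg_add_cancel_comm_assoc] at this
  rw [← this]
  beta_reduce
  congr 1
  omega

theorem IsBilateralPoint.not_periodic (hz : IsBilateralPoint Y z) (hY : MinimalSubshift Y)
    (hinf : Y.Infinite) {g : ℤ} (hg : 0 < g) : ¬ Function.Periodic z g := by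
  intro hper
  let tail : ℤ → Seq2 := fun k n => z (k + n)
  have hmod : ∀ k, tail (k % g) = tail k := fun k => funext fun n => by
    have := hper.int_mul (k / g) (k % g + n)
    simp only [tail]
    rwa [Int.cast_id, show k % g + n + k / g * g = k + n by
      linarith [Int.emod_add_mul_ediv k g, mul_comm g (k / g)], eq_comm] at this
  have hfin : (Set.range tail).Finite := by
    refine ((Set.finite_Ico 0 g).image tail).subset (Set.range_subset_iff.2 fun k => ?_)
    exact ⟨k % g, ⟨Int.emod_nonneg _ hg.ne', Int.emod_lt_of_pos _ hg⟩, hmod k⟩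
  have hrange : Set.range tail = Y := by
    refine hY.2 _ (Set.range_subset_iff.2 hz) hfin.isClosed ?_ (Set.range_nonempty tail)
    rintro _ ⟨k, rfl⟩
    refine ⟨k + 1, funext fun n => ?_⟩
    simp only [tail, shiftMap]
    congr 1
    push_cast
    ring
  exact hinf (hrange ▸ hfin)

end Subshift

/-! ### Runs along a progression -/

theorem exists_lt_forall_le_not_succ {P : ℕ → Prop} {c : ℕ} (h0 : P 0) (hc : ¬ P c) :
    ∃ l < c, (∀ j ≤ l, P j) ∧ ¬ P (l + 1) := by
  classical
  have h : ∃ k, ¬ P k := ⟨c, hc⟩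
  have hpos : Nat.find h ≠ 0 := fun h' => Nat.find_spec h (h' ▸ h0)
  have hle : Nat.find h ≤ c := Nat.find_min' h hc
  refine ⟨Nat.find h - 1, by omega, fun j hj => not_not.1 (Nat.find_min h (by omega)), ?_⟩
  rw [Nat.sub_add_cancel (Nat.one_le_iff_ne_zero.2 hpos)]
  exact Nat.find_spec h

theorem TotallyUniformlyRecurrent.exists_bounded_occurrence {A : Type*} [Finite A] {z : ℤ → A}
    (hz : TotallyUniformlyRecurrent z) {Q : ℤ} (hQ : 0 < Q) :
    ∃ K : ℕ, ∀ p q : ℤ, Q ∣ p - q → ∃ k ≤ K, z (p + k * Q) = z q := by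
  have := Fintype.ofFinite A
  have hocc : ∀ c : ℤ × A, ∃ r, (∃ q, Q ∣ q - c.1 ∧ z q = c.2) → Q ∣ r - c.1 ∧ z r = c.2 := by
    intro c
    by_cases h : ∃ q, Q ∣ q - c.1 ∧ z q = c.2
    · exact ⟨h.choose, fun _ => h.choose_spec⟩
    · exact ⟨0, fun h' => (h h').elim⟩
  choose r hr using hocc
  obtain ⟨R, hR0, hR⟩ := exists_forall_mem_abs_le (Finset.Ico 0 Q ×ˢ Finset.univ) r
  obtain ⟨G, hG, hret⟩ := hz Q hQ R
  refine ⟨(2 * R + G).toNat, fun p q hpq => ?_⟩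
  let c : ℤ × A := (p % Q, z q)
  have hpc : Q ∣ p - c.1 := Int.dvd_self_sub_emod
  obtain ⟨hrc, hrz⟩ := hr c ⟨q, by simpa using dvd_sub hpc hpq, rfl⟩
  have hrR := hR c (Finset.mk_mem_product
    (Finset.mem_Ico.2 ⟨Int.emod_nonneg _ hQ.ne', Int.emod_lt_of_pos _ hQ⟩) (Finset.mem_univ _))
  obtain ⟨g, hg1, hg2, hgQ, hgz⟩ := hret (p + R)
  obtain ⟨k, hk⟩ : Q ∣ r c + g - p := by
    have := dvd_add (dvd_sub hrc hpc) hgQ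
    rwa [show r c - c.1 - (p - c.1) + g = r c + g - p by ring] at this
  have hrR' := abs_le.1 hrR
  have hk0 : 0 ≤ k := nonneg_of_mul_nonneg_right (by omega : 0 ≤ Q * k) hQ
  have hkQ : k ≤ Q * k := le_mul_of_one_le_left hk0 hQ
  refine ⟨k.toNat, by omega, ?_⟩
  rw [Int.toNat_of_nonneg hk0, show p + k * Q = r c + g by linarith [mul_comm k Q], hgz _ hrR, hrz]

section BooleanSequences

variable {z : ℤ → Bool}

theorem NoConstantClass.exists_bounded_return (hNC : NoConstantClass z)
    (hz : TotallyUniformlyRecurrent z) {Q : ℤ} (hQ : 0 < Q) :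
    ∃ K : ℕ, ∀ p b, ∃ k ≤ K, z (p + (k : ℕ) * Q) = b := by
  obtain ⟨K, h⟩ := hz.exists_bounded_occurrence hQ
  refine ⟨K, fun p b => ?_⟩
  by_cases hb : z p = b
  · exact ⟨0, K.zero_le, by simpa using hb⟩
  · obtain ⟨j, hj⟩ := hNC Q hQ p
    obtain ⟨k, hk, hkz⟩ := h p (p + j * Q) ⟨-j, by ring⟩
    exact ⟨k, hk, hkz.trans ((Bool.eq_not.2 hj).trans (Bool.eq_not.2 (Ne.symm hb)).symm)⟩

/-- Van der Waerden's theorem for the colouring of `ℤ` by blocks long enough to contain both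
symbols. -/
theorem NoConstantClass.exists_constant_progressions (hNC : NoConstantClass z)
    (hz : TotallyUniformlyRecurrent z) (N : ℕ) :
    ∃ T : ℤ, 0 < T ∧ ∀ b, ∃ p, ∀ j : ℕ, j ≤ N → z (p + j * T) = b := by
  obtain ⟨K, hret⟩ := hNC.exists_bounded_return hz one_pos
  obtain ⟨T, hT, p, c, hc⟩ := Combinatorics.exists_mono_homothetic_copy (M := ℤ)
    ((Finset.range (N + 1)).image (fun j : ℕ => (j : ℤ)))
    (fun m : ℤ => fun l : Fin (K + 1) => z (m + l))
  refine ⟨T, by exact_mod_cast hT, fun b => ?_⟩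
  obtain ⟨k, hk, hkb⟩ := hret p b
  refine ⟨p + k, fun j hj => ?_⟩
  have h0 := hc 0 (by simp)
  have h1 := hc j (Finset.mem_image_of_mem _ (Finset.mem_range.2 (by omega)))
  have h2 := congrFun (h1.trans h0.symm) ⟨k, by omega⟩
  simp only [nsmul_eq_mul, mul_zero, zero_add, mul_one] at h2 hkb
  rw [← hkb, ← h2]
  congr 1
  ring

section Runs

variable {T : ℤ} {n : ℕ}

theorem exists_run_end (hret : ∀ p b, ∃ k : ℕ, z (p + k * T) = b) {b : Bool}
    (hrun : ∃ p, ∀ j : ℕ, j ≤ n → z (p - j * T) = b) :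
    ∃ e, (∀ j : ℕ, j ≤ n → z (e - j * T) = b) ∧ z (e + T) ≠ b := by
  obtain ⟨p, hp⟩ := hrun
  obtain ⟨c, hc⟩ := hret p (!b)
  obtain ⟨l, -, hl, hl'⟩ := exists_lt_forall_le_not_succ (P := fun k : ℕ => z (p + k * T) = b)
    (by simpa using hp 0 n.zero_le) (by rw [hc]; exact Bool.not_ne_self b)
  refine ⟨p + l * T, fun j hj => ?_, ?_⟩
  · rcases le_total j l with hjl | hlj
    · exact (congrArg z (by push_cast [hjl]; ring)).trans (hl (l - j) (by omega))
    · exact (congrArg z (by push_cast [hlj]; ring)).trans (hp (j - l) (by omega))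
  · rwa [show p + l * T + T = p + (l + 1 : ℕ) * T by push_cast; ring]

/-- Seen through the window `{0, T, …, (n - 1) T}` from `p`, the sequence `z` starts with a run of
exactly `i + 1` symbols `b`. -/
def StartsWithRun (z : ℤ → Bool) (T : ℤ) (n : ℕ) (p : ℤ) (b : Bool) (i : ℕ) : Prop :=
  (∀ j : ℕ, j ≤ i → z (p + j * T) = b) ∧ (i + 1 < n → z (p + (i + 1 : ℕ) * T) ≠ b)

theorem StartsWithRun.exists_ne {p p' : ℤ} {b b' : Bool} {i i' : ℕ}
    (h : StartsWithRun z T n p b i) (h' : StartsWithRun z T n p' b' i') (hi : i < n) (hi' : i' < n)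
    (hne : (b, i) ≠ (b', i')) : ∃ j < n, z (p + (j : ℕ) * T) ≠ z (p' + j * T) := by
  by_cases hb : b = b'
  · subst hb
    rcases lt_trichotomy i i' with hlt | rfl | hlt
    · exact ⟨i + 1, by omega, by rw [h'.1 _ hlt]; exact h.2 (by omega)⟩
    · exact (hne rfl).elim
    · exact ⟨i' + 1, by omega, by rw [h.1 _ hlt]; exact (h'.2 (by omega)).symm⟩
  · exact ⟨0, by omega, by rwa [h.1 0 i.zero_le, h'.1 0 i'.zero_le]⟩

/-- The window `{0, T, …, (n - 1) T}`. -/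
def progressionWindow (T : ℤ) (n : ℕ) : Finset ℤ :=
  (Finset.range n).image fun j : ℕ => (j : ℤ) * T

theorem mul_mem_progressionWindow {j : ℕ} (hj : j < n) : (j : ℤ) * T ∈ progressionWindow T n :=
  Finset.mem_image_of_mem (fun j : ℕ => (j : ℤ) * T) (Finset.mem_range.2 hj)

theorem card_progressionWindow_le (T : ℤ) (n : ℕ) : (progressionWindow T n).card ≤ n :=
  Finset.card_image_le.trans (Finset.card_range n).le

/-- After a change of symbol, the new symbol persists for `n` steps of `T`. -/
def HasLongRuns (z : ℤ → Bool) (T : ℤ) (n : ℕ) : Prop :=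
  ∀ m, z m ≠ z (m + T) → ∀ j : ℕ, 1 ≤ j → j ≤ n → z (m + j * T) = z (m + T)

theorem WindowBound.exists_agree_of_startsWithRun (hz : WindowBound z) (hn : 0 < n)
    {f : Bool × Fin n → ℤ} (hf : ∀ c, StartsWithRun z T n (f c) c.1 c.2) (p : ℤ) :
    ∃ c, ∀ j < n, z (p + (j : ℕ) * T) = z (f c + j * T) := by
  obtain ⟨c, hc⟩ := hz.exists_agree (f := f) ⟨_, mul_mem_progressionWindow hn⟩
    (fun c c' hc => by
      obtain ⟨j, hj, hne⟩ := (hf c).exists_ne (hf c') c.2.2 c'.2.2 fun h =>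
        hc (Prod.ext (Prod.mk.inj h).1 (Fin.ext (Prod.mk.inj h).2))
      exact ⟨_, mul_mem_progressionWindow hj, hne⟩)
    (by simpa using card_progressionWindow_le T n) p
  exact ⟨c, fun j hj => hc _ (mul_mem_progressionWindow hj)⟩

/-- The `2 (n + 1)` patterns seen around the ends of two runs longer than `n` are all the patterns
on the window, and none of them starts with a short run preceded by a change. -/
theorem WindowBound.hasLongRuns (hz : WindowBound z) (hret : ∀ p b, ∃ k : ℕ, z (p + k * T) = b)
    (hret' : ∀ p b, ∃ k : ℕ, z (p - k * T) = b) (hn : 1 ≤ n)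
    (hrun : ∀ b, ∃ p, ∀ j : ℕ, j ≤ n → z (p + j * T) = b) : HasLongRuns z T n := by
  intro m hm
  choose e he he' using fun b => exists_run_end (n := n) (b := b) hret <| by
    obtain ⟨p, hp⟩ := hrun b
    refine ⟨p + n * T, fun j hj => ?_⟩
    exact (congrArg z (by push_cast [hj]; ring)).trans (hp (n - j) (by omega))
  obtain ⟨q, hq, hq'⟩ := exists_run_end (T := -T) (n := n) (b := z (m + T))
    (by simpa only [mul_neg, ← sub_eq_add_neg] using hret')
    (by simpa only [mul_neg, sub_neg_eq_add] using hrun _)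
  let f : Bool × Fin (n + 1) → ℤ := fun c =>
    if c.1 = z m ∧ (c.2 : ℕ) = 0 then m else e c.1 - (c.2 : ℕ) * T
  have hf : ∀ c, StartsWithRun z T (n + 1) (f c) c.1 c.2 := by
    rintro ⟨b, i⟩
    simp only [f]
    split_ifs with hc
    · obtain ⟨rfl, hi⟩ := hc
      simp only [hi]
      exact ⟨fun j hj => by simp [Nat.le_zero.1 hj], fun _ => by simpa using hm.symm⟩
    · refine ⟨fun j hj => ?_, fun _ => ?_⟩
      · exact (congrArg z (by push_cast [hj]; ring)).trans (he b (i - j) (by omega))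
      · rw [show e b - (i : ℕ) * T + ((i : ℕ) + 1 : ℕ) * T = e b + T by push_cast; ring]
        exact he' b
  obtain ⟨⟨b, i⟩, hbi⟩ := hz.exists_agree_of_startsWithRun n.succ_pos hf (q + -T)
  have hagree : ∀ j : ℕ, 1 ≤ j → j ≤ n → z (m + T) = z (f (b, i) + j * T) := fun j hj hjn => by
    rw [← hbi j (by omega), ← hq (j - 1) (by omega)]
    exact congrArg z (by push_cast [hj]; ring)
  have hb : b ≠ z (m + T) := by
    have := hbi 0 n.succ_pos
    rw [(hf (b, i)).1 0 (Nat.zero_le _), Nat.cast_zero, zero_mul, add_zero] at this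
    exact fun h => hq' (this.trans h)
  have hi : (i : ℕ) = 0 := by
    by_contra hi
    exact hb (((hf (b, i)).1 1 (by simp only; omega)).symm.trans (hagree 1 le_rfl hn).symm)
  have hfm : f (b, i) = m := if_pos ⟨(Bool.eq_not.2 hb).trans (Bool.eq_not.2 hm).symm, hi⟩
  exact fun j hj hjn => hfm ▸ (hagree j hj hjn).symm

theorem HasLongRuns.backward (h : HasLongRuns z T n) {m : ℤ} (hm : z m ≠ z (m + T)) {j : ℕ}
    (hj : j < n) : z (m - j * T) = z m := by
  induction j with
  | zero => simp
  | succ i ih =>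
    have ih := ih (by omega)
    have hstep : m - (i + 1 : ℕ) * T + T = m - i * T := by push_cast; ring
    by_contra hne
    have := h (m - (i + 1 : ℕ) * T) (by rwa [hstep, ih]) (i + 2) (by omega) (by omega)
    rw [hstep, ih, show m - (i + 1 : ℕ) * T + (i + 2 : ℕ) * T = m + T by push_cast; ring] at this
    exact hm this.symm

theorem HasLongRuns.startsWithRun (h : HasLongRuns z T n) {m : ℤ} (hm : z m ≠ z (m + T)) {i : ℕ}
    (hi : i < n) : StartsWithRun z T n (m - i * T) (z m) i := by
  refine ⟨fun j hj => ?_, fun _ => ?_⟩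
  · rw [show m - i * T + j * T = m - (i - j : ℕ) * T by push_cast [hj]; ring,
      h.backward hm (by omega)]
  · rw [show m - i * T + (i + 1 : ℕ) * T = m + T by push_cast; ring]
    exact hm.symm

/-- If all three comparisons failed, the window `{0, T, …, (n - 1) T, d}` would carry the `2 n`
patterns of run ends and three more. -/
theorem HasLongRuns.exists_agree_near (h : HasLongRuns z T n) (hz : WindowBound z) (hn : 3 ≤ n)
    (hsw : ∀ b, ∃ q, z q = b ∧ z (q + T) ≠ b) {m m' : ℤ} (hm : z m = true ∧ z (m + T) = false)
    (hm' : z m' = true ∧ z (m' + T) = false) (d : ℤ) :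
    ∃ k < 3, z (m + d - (k : ℕ) * T) = z (m' + d - k * T) := by
  by_contra! hd
  obtain ⟨e, he, he'⟩ := hsw false
  let q : Bool → ℤ := fun b => cond b m e
  have hq : ∀ b, z (q b) = b ∧ z (q b) ≠ z (q b + T) := by
    rintro (_ | _)
    · exact ⟨he, by simpa [q, he] using he'.symm⟩
    · exact ⟨hm.1, by simp [q, hm]⟩
  let label : (Bool × Fin n) ⊕ Fin 3 → Bool × ℕ := Sum.elim (Prod.map id (↑)) fun k => (true, k)
  let f : (Bool × Fin n) ⊕ Fin 3 → ℤ :=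
    Sum.elim (fun c => q c.1 - (c.2 : ℕ) * T) fun k => m' - (k : ℕ) * T
  have hlabel : ∀ o, (label o).2 < n := by
    rintro (⟨_, i⟩ | k)
    · exact i.2
    · exact k.2.trans_le hn
  have hf : ∀ o, StartsWithRun z T n (f o) (label o).1 (label o).2 := by
    rintro (⟨b, i⟩ | k)
    · have := h.startsWithRun (hq b).2 i.2
      rwa [(hq b).1] at this
    · have := h.startsWithRun (m := m') (by simp [hm']) (k.2.trans_le hn)
      rwa [hm'.1] at this
  have hd' : ∀ (i : Fin n) (k : Fin 3), (i : ℕ) = k →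
      z (f (.inl (true, i)) + d) ≠ z (f (.inr k) + d) := fun i k hik => by
    have := hd k k.2
    rw [add_sub_right_comm, add_sub_right_comm, ← hik] at this
    simpa only [f, q, Sum.elim_inl, Sum.elim_inr, cond_true, ← hik] using this
  have hcard := hz _ f (insert d (progressionWindow T n)) (Finset.insert_nonempty _ _)
    fun o o' hoo => by
      by_cases hl : label o = label o'
      · refine ⟨d, Finset.mem_insert_self _ _, ?_⟩
        rcases o with ⟨b, i⟩ | k <;> rcases o' with ⟨b', i'⟩ | k' <;>
          simp only [label, Sum.elim_inl, Sum.elim_inr, Prod.map, id, Prod.mk.injEq] at hl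
        · exact (hoo (by rw [hl.1, Fin.ext hl.2])).elim
        · exact hl.1 ▸ hd' i k' hl.2
        · exact hl.1 ▸ (hd' i' k hl.2.symm).symm
        · exact (hoo (by rw [Fin.ext hl.2])).elim
      · obtain ⟨j, hj, hne⟩ := (hf o).exists_ne (hf o') (hlabel o) (hlabel o') hl
        exact ⟨_, Finset.mem_insert_of_mem (mul_mem_progressionWindow hj), hne⟩
  have hwindow := (Finset.card_insert_le d (progressionWindow T n)).trans
    (Nat.succ_le_succ (card_progressionWindow_le T n))
  simp only [Fintype.card_sum, Fintype.card_prod, Fintype.card_bool, Fintype.card_fin] at hcard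
  omega

theorem HasLongRuns.exists_change_near (h : HasLongRuns z T n) (hz : WindowBound z) (hn : 3 ≤ n)
    (hsw : ∀ b, ∃ q, z q = b ∧ z (q + T) ≠ b) {m m' : ℤ} (hm : z m = true ∧ z (m + T) = false)
    (hm' : z m' = true ∧ z (m' + T) = false) {f : ℤ} {b : Bool} (hf : z (m + f) = b)
    (hfT : z (m + f + T) ≠ b) :
    ∃ u : ℤ, |u| ≤ 2 ∧ z (m' + f + u * T) = b ∧ z (m' + f + u * T + T) ≠ b := by
  have hfne : z (m + f) ≠ z (m + f + T) := by rw [hf]; exact hfT.symm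
  obtain ⟨k, hk, hkz⟩ := h.exists_agree_near hz hn hsw hm hm' f
  obtain ⟨k', hk', hkz'⟩ := h.exists_agree_near hz hn hsw hm hm' (f + 3 * T)
  rw [h.backward hfne (by omega), hf] at hkz
  rw [show m + (f + 3 * T) - k' * T = m + f + (3 - k' : ℕ) * T by push_cast [hk'.le]; ring,
    h _ hfne _ (by omega) (by omega)] at hkz'
  obtain ⟨l, hl, hlb, hlb'⟩ := exists_lt_forall_le_not_succ (c := 3 - k' + k)
    (P := fun l : ℕ => z (m' + f - k * T + l * T) = b) (by simpa using hkz.symm) (by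
      refine fun hb => hfT (hkz'.trans ((congrArg z ?_).trans hb))
      push_cast [hk'.le]
      ring)
  refine ⟨l - k, by rw [abs_le]; omega, ?_, ?_⟩
  · exact (congrArg z (by ring)).trans (hlb l le_rfl)
  · exact fun hb => hlb' ((congrArg z (by push_cast; ring)).trans hb)

end Runs

/-! ### The approximate phase -/

/-- A difference `T` along which `z` alternates between long runs of both symbols. -/
structure IsRunScale (z : ℤ → Bool) (T : ℤ) (n : ℕ) : Prop where
  windowBound : WindowBound z
  three_le : 3 ≤ n
  hasLongRuns : HasLongRuns z T n
  forward : ∀ p b, ∃ k : ℕ, z (p + k * T) = b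
  backward : ∀ p b, ∃ k : ℕ, z (p - k * T) = b

/-- `m` is the last position of a run of `true` along multiples of `T`. -/
def IsExit (z : ℤ → Bool) (T m : ℤ) : Prop :=
  z m = true ∧ z (m + T) = false

/-- Along multiples of `T`, the exit `m` is followed by a run of `E` symbols `false` and then by a
run of `true` ending at `m + G T`. -/
structure IsCycle (z : ℤ → Bool) (T m : ℤ) (E G : ℕ) : Prop where
  lt : E < G
  eq_false : ∀ j : ℕ, 1 ≤ j → j ≤ E → z (m + j * T) = false
  eq_true : ∀ j : ℕ, E < j → j ≤ G → z (m + j * T) = true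
  eq_false_end : z (m + (G + 1 : ℕ) * T) = false

/-- A function `J` that behaves like the position of a point on a circle of length `G`, up to
bounded errors: `z` is `false` on the arc `(0, E)` and `true` on `(E, G)`, and the increments of `J`
under translation are constant modulo `G`. -/
structure IsPhase (z : ℤ → Bool) (n G E : ℕ) (J : ℤ → ℕ) : Prop where
  le_length : n ≤ G
  arc_le : E ≤ G
  phase_le : ∀ p, J p ≤ G + 2
  eq_false : ∀ p, 1 ≤ J p → J p + 3 ≤ E → z p = false
  eq_true : ∀ p, E + 3 ≤ J p → z p = true
  cocycle : ∀ p d d', ∃ k : ℤ,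
    |(J (p + d + d') + J p - J (p + d) - J (p + d') - k * G : ℤ)| ≤ 2 + 2 * |k|
  exists_eq : ∀ j < G, ∃ p, J p = j

section Phase

variable {z : ℤ → Bool} {T m m' : ℤ} {n E G E' G' j : ℕ}

theorem NoConstantClass.exists_isRunScale (hNC : NoConstantClass z)
    (hz : TotallyUniformlyRecurrent z) (hW : WindowBound z) (hn : 3 ≤ n) :
    ∃ T, IsRunScale z T n := by
  obtain ⟨T, hT, hrun⟩ := hNC.exists_constant_progressions hz n
  obtain ⟨K, hK⟩ := hNC.exists_bounded_return hz hT
  have hforward : ∀ p b, ∃ k : ℕ, z (p + k * T) = b := fun p b => (hK p b).imp fun _ h => h.2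
  have hbackward : ∀ p b, ∃ k : ℕ, z (p - k * T) = b := fun p b => by
    obtain ⟨k, hk, hkb⟩ := hK (p - K * T) b
    exact ⟨K - k, (congrArg z (by push_cast [hk]; ring)).trans hkb⟩
  exact ⟨T, hW, hn, hW.hasLongRuns hforward hbackward (by omega) hrun, hforward, hbackward⟩

theorem IsRunScale.exists_change (h : IsRunScale z T n) (b : Bool) :
    ∃ q, z q = b ∧ z (q + T) ≠ b := by
  obtain ⟨c, hc⟩ := h.forward 0 b
  obtain ⟨k, hk⟩ := h.forward (0 + c * T) (!b)
  obtain ⟨l, -, hl, hl'⟩ := exists_lt_forall_le_not_succ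
    (P := fun l : ℕ => z (0 + c * T + l * T) = b) (by simpa using hc)
    (by rw [hk]; exact Bool.not_ne_self b)
  exact ⟨_, hl l le_rfl, fun hb => hl' ((congrArg z (by push_cast; ring)).trans hb)⟩

theorem IsRunScale.exists_isExit_sub (h : IsRunScale z T n) (p : ℤ) :
    ∃ k : ℕ, IsExit z T (p - k * T) := by
  obtain ⟨c, hc⟩ := h.backward p false
  obtain ⟨k, hk⟩ := h.backward (p - c * T) true
  obtain ⟨l, -, hl, hl'⟩ := exists_lt_forall_le_not_succ
    (P := fun l : ℕ => z (p - c * T - l * T) = false) (by simpa using hc)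
    (fun h => Bool.noConfusion (hk.symm.trans h))
  refine ⟨c + (l + 1), ?_, ?_⟩
  · exact (congrArg z (by push_cast; ring)).trans (Bool.eq_true_of_not_eq_false hl')
  · exact (congrArg z (by push_cast; ring)).trans (hl l le_rfl)

theorem IsExit.ne (hm : IsExit z T m) : z m ≠ z (m + T) := by
  rw [hm.1, hm.2]
  decide

theorem IsRunScale.exists_isCycle (h : IsRunScale z T n) (hm : IsExit z T m) :
    ∃ E G, n ≤ E ∧ IsCycle z T m E G := by
  obtain ⟨c, hc⟩ := h.forward (m + T) true
  obtain ⟨k, -, hk, hk'⟩ := exists_lt_forall_le_not_succ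
    (P := fun k : ℕ => z (m + T + k * T) = false) (by simpa using hm.2)
    (fun h => Bool.noConfusion (hc.symm.trans h))
  have hkT : z (m + T + (k + 1 : ℕ) * T) = true := Bool.eq_true_of_not_eq_false hk'
  obtain ⟨c', hc'⟩ := h.forward (m + T + (k + 1 : ℕ) * T) false
  obtain ⟨l, -, hl, hl'⟩ := exists_lt_forall_le_not_succ
    (P := fun l : ℕ => z (m + T + (k + 1 : ℕ) * T + l * T) = true) (by simpa using hkT)
    (fun h => Bool.noConfusion (hc'.symm.trans h))
  refine ⟨k + 1, k + 2 + l, ?_, by omega, fun j h1 h2 => ?_, fun j h1 h2 => ?_, ?_⟩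
  · by_contra hlt
    have := h.hasLongRuns m hm.ne (k + 2) (by omega) (by omega)
    rw [hm.2, show m + (k + 2 : ℕ) * T = m + T + (k + 1 : ℕ) * T by push_cast; ring, hkT] at this
    exact Bool.noConfusion this
  · exact (congrArg z (by push_cast [h1]; ring)).trans (hk (j - 1) (by omega))
  · exact (congrArg z (by push_cast [show k + 2 ≤ j by omega]; ring)).trans
      (hl (j - (k + 2)) (by omega))
  · exact (congrArg z (by push_cast; ring)).trans (Bool.eq_false_of_not_eq_true hl')

theorem IsCycle.isExit_end (h : IsCycle z T m E G) : IsExit z T (m + G * T) :=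
  ⟨h.eq_true G h.lt le_rfl, (congrArg z (by push_cast; ring)).trans h.eq_false_end⟩

theorem IsCycle.le_of_isExit (h : IsCycle z T m E G) (hj : 1 ≤ j)
    (hx : IsExit z T (m + j * T)) : G ≤ j := by
  by_contra! hlt
  rcases le_or_gt j E with hjE | hjE
  · exact Bool.noConfusion ((h.eq_false j hj hjE).symm.trans hx.1)
  · have hnext := h.eq_true (j + 1) (by omega) (by omega)
    rw [show m + (j + 1 : ℕ) * T = m + j * T + T by push_cast; ring, hx.2] at hnext
    exact Bool.noConfusion hnext

theorem IsCycle.le_of_eq_true (h : IsCycle z T m E G) (hx : z (m + j * T + T) = true) :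
    E ≤ j := by
  by_contra! hlt
  have hnext := h.eq_false (j + 1) (by omega) (by omega)
  rw [show m + (j + 1 : ℕ) * T = m + j * T + T by push_cast; ring, hx] at hnext
  exact Bool.noConfusion hnext

theorem IsRunScale.le_arc (h : IsRunScale z T n) (hm : IsExit z T m)
    (hc : IsCycle z T m E G) : n ≤ E := by
  obtain ⟨E', G', hE', hc'⟩ := h.exists_isCycle hm
  by_contra! hlt
  have := hc.eq_true (E + 1) (by omega) hc.lt
  rw [hc'.eq_false (E + 1) (by omega) (by omega)] at this
  exact Bool.noConfusion this

theorem IsRunScale.length_le (h : IsRunScale z T n) (hm : IsExit z T m) (hm' : IsExit z T m')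
    (hc : IsCycle z T m E G) (hc' : IsCycle z T m' E' G') : G' ≤ G + 2 := by
  have hnE := h.le_arc hm hc
  have hEG := hc.lt
  have hn := h.three_le
  have hend := hc.isExit_end
  obtain ⟨u, hu, h1, h2⟩ := h.hasLongRuns.exists_change_near h.windowBound hn h.exists_change
    hm hm' hend.1 (by rw [hend.2]; decide)
  rw [abs_le] at hu
  have := hc'.le_of_isExit (j := (G + u).toNat) (by omega) (by
    rw [Int.toNat_of_nonneg (by omega), show m' + (G + u) * T = m' + G * T + u * T by ring]
    exact ⟨h1, Bool.eq_false_of_not_eq_true h2⟩)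
  omega

theorem IsRunScale.arc_le (h : IsRunScale z T n) (hm : IsExit z T m) (hm' : IsExit z T m')
    (hc : IsCycle z T m E G) (hc' : IsCycle z T m' E' G') : E' ≤ E + 2 := by
  have hnE := h.le_arc hm hc
  have hn := h.three_le
  obtain ⟨u, hu, -, h2⟩ := h.hasLongRuns.exists_change_near h.windowBound hn h.exists_change
    hm hm' (hc.eq_false E (by omega) le_rfl) (by
      rw [show m + E * T + T = m + (E + 1 : ℕ) * T by push_cast; ring,
        hc.eq_true (E + 1) (by omega) hc.lt]
      decide)
  rw [abs_le] at hu
  have := hc'.le_of_eq_true (j := (E + u).toNat) (by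
    rw [Int.toNat_of_nonneg (by omega), show m' + (E + u) * T = m' + E * T + u * T by ring]
    exact Bool.eq_true_of_not_eq_false h2)
  omega

theorem IsRunScale.exists_abs_sub_mul_le_nat (h : IsRunScale z T n) (hm : IsExit z T m)
    (hc : IsCycle z T m E G) (w : ℕ) : ∀ q, IsExit z T q → IsExit z T (q + w * T) →
      ∃ k : ℕ, |(w : ℤ) - k * G| ≤ 2 * k := by
  induction w using Nat.strong_induction_on with
  | _ w ih =>
    intro q hq hqw
    rcases Nat.eq_zero_or_pos w with rfl | hw
    · exact ⟨0, by simp⟩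
    obtain ⟨E', G', -, hc'⟩ := h.exists_isCycle hq
    have hle := hc'.le_of_isExit hw hqw
    have hpos := hc'.lt
    obtain ⟨k, hk⟩ := ih (w - G') (by omega) (q + G' * T) hc'.isExit_end (by
      rwa [show q + G' * T + (w - G' : ℕ) * T = q + w * T by push_cast [hle]; ring])
    have h1 := h.length_le hm hq hc hc'
    have h2 := h.length_le hq hm hc' hc
    refine ⟨k + 1, ?_⟩
    push_cast [hle, abs_le, add_mul] at hk ⊢
    constructor <;> linarith [hk.1, hk.2, (by exact_mod_cast h1 : (G' : ℤ) ≤ G + 2),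
      (by exact_mod_cast h2 : (G : ℤ) ≤ G' + 2)]

theorem IsRunScale.exists_abs_sub_mul_le (h : IsRunScale z T n) (hm : IsExit z T m)
    (hc : IsCycle z T m E G) {q w : ℤ} (hq : IsExit z T q) (hqw : IsExit z T (q + w * T)) :
    ∃ k : ℤ, |w - k * G| ≤ 2 * |k| := by
  obtain ⟨w, rfl | rfl⟩ := w.eq_nat_or_neg
  · obtain ⟨k, hk⟩ := h.exists_abs_sub_mul_le_nat hm hc w q hq hqw
    exact ⟨k, by rwa [Nat.abs_cast]⟩
  · obtain ⟨k, hk⟩ := h.exists_abs_sub_mul_le_nat hm hc w _ hqw (by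
      rwa [neg_mul, neg_add_cancel_right])
    refine ⟨-k, ?_⟩
    rwa [abs_neg, Nat.abs_cast, ← abs_neg, neg_sub, sub_neg_eq_add, neg_mul, neg_add_eq_sub]

/-- The number of steps of length `T` from the last exit before `p`, or at `p`, to `p`. -/
noncomputable def age (z : ℤ → Bool) (T p : ℤ) : ℕ :=
  sInf {k : ℕ | IsExit z T (p - k * T)}

theorem IsRunScale.isExit_sub_age (h : IsRunScale z T n) (p : ℤ) :
    IsExit z T (p - age z T p * T) :=
  Nat.sInf_mem (h.exists_isExit_sub p)

theorem age_le {p : ℤ} {k : ℕ} (hk : IsExit z T (p - k * T)) : age z T p ≤ k :=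
  Nat.sInf_le hk

theorem IsCycle.age_lt {p : ℤ} (h : IsCycle z T (p - age z T p * T) E G) : age z T p < G := by
  by_contra! hle
  have := h.lt
  have := age_le (p := p) (k := age z T p - G) (by
    convert h.isExit_end using 1
    push_cast [hle]
    ring)
  omega

theorem IsRunScale.age_cocycle (h : IsRunScale z T n) (hm : IsExit z T m)
    (hc : IsCycle z T m E G) (p d d' : ℤ) : ∃ k : ℤ,
      |(age z T (p + d + d') + age z T p - age z T (p + d) - age z T (p + d') - k * G : ℤ)| ≤
        2 + 2 * |k| := by
  have hx := h.isExit_sub_age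
  have hpd : p - age z T p * T + (d + (age z T p - age z T (p + d)) * T) =
      p + d - age z T (p + d) * T := by ring
  obtain ⟨u, hu, h1, h2⟩ := h.hasLongRuns.exists_change_near h.windowBound h.three_le
    h.exists_change (hx p) (hx (p + d')) (f := d + (age z T p - age z T (p + d)) * T)
    (by rw [hpd, (hx (p + d)).1]) (by rw [hpd, (hx (p + d)).2]; decide)
  obtain ⟨k, hk⟩ := h.exists_abs_sub_mul_le hm hc (hx (p + d + d'))
    (w := age z T (p + d + d') + age z T p - age z T (p + d) - age z T (p + d') + u) (by
      rw [← show p + d' - age z T (p + d') * T + (d + (age z T p - age z T (p + d)) * T) + u * T =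
        p + d + d' - age z T (p + d + d') * T + (age z T (p + d + d') + age z T p -
          age z T (p + d) - age z T (p + d') + u) * T by ring]
      exact ⟨h1, Bool.eq_false_of_not_eq_true h2⟩)
  refine ⟨k, ?_⟩
  rw [abs_le] at hk hu ⊢
  constructor <;> linarith [hk.1, hk.2, hu.1, hu.2]

theorem IsRunScale.isPhase_age (h : IsRunScale z T n) (hm : IsExit z T m)
    (hc : IsCycle z T m E G) : IsPhase z n G E (age z T) := by
  have hx := h.isExit_sub_age
  have hcycle : ∀ p, ∃ E' G', IsCycle z T (p - age z T p * T) E' G' ∧ E ≤ E' + 2 ∧ E' ≤ E + 2 ∧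
      age z T p < G' ∧ G' ≤ G + 2 := fun p => by
    obtain ⟨E', G', -, hc'⟩ := h.exists_isCycle (hx p)
    exact ⟨E', G', hc', h.arc_le (hx p) hm hc' hc, h.arc_le hm (hx p) hc hc', hc'.age_lt,
      h.length_le hm (hx p) hc hc'⟩
  refine ⟨(h.le_arc hm hc).trans hc.lt.le, hc.lt.le, fun p => ?_, fun p h1 h2 => ?_,
    fun p h1 => ?_, h.age_cocycle hm hc, fun j hj => ⟨m + j * T, ?_⟩⟩
  · obtain ⟨E', G', -, -, -, h1, h2⟩ := hcycle p
    omega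
  · obtain ⟨E', G', hc', hE, -⟩ := hcycle p
    simpa using hc'.eq_false _ h1 (by omega)
  · obtain ⟨E', G', hc', -, hE, hlt, -⟩ := hcycle p
    simpa using hc'.eq_true _ (by omega) hlt.le
  · have hle : age z T (m + j * T) ≤ j := age_le (by rwa [add_sub_cancel_right])
    by_contra hne
    have := hc.le_of_isExit (j := j - age z T (m + j * T)) (by omega) (by
      convert hx (m + j * T) using 1
      push_cast [hle]
      ring)
    omega

theorem NoConstantClass.exists_isPhase (hNC : NoConstantClass z)
    (hz : TotallyUniformlyRecurrent z) (hW : WindowBound z) (hn : 3 ≤ n) :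
    ∃ G E J, IsPhase z n G E J := by
  obtain ⟨T, hT⟩ := hNC.exists_isRunScale hz hW hn
  obtain ⟨k, hk⟩ := hT.exists_isExit_sub 0
  obtain ⟨E, G, -, hc⟩ := hT.exists_isCycle hk
  exact ⟨G, E, _, hT.isPhase_age hk hc⟩

end Phase

/-! ### Passage to a rotation -/

/-- The coding of the circle `ℝ/ℤ` that is `false` on `[0, lam)` and `true` on `[lam, 1)`. -/
noncomputable def arcCode (lam r : ℝ) : Bool :=
  decide (lam ≤ Int.fract r)

/-- `y` codes the orbit of `κ` under the irrational rotation by `α` with respect to the arc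
`(lam, 1)`; nothing is required at the times at which the orbit meets an endpoint of the arc. -/
structure IsRotationCoding (y : ℤ → Bool) (α lam κ : ℝ) : Prop where
  irrational : Irrational α
  pos : 0 < lam
  lt_one : lam < 1
  eq_arcCode : ∀ d : ℤ, Int.fract (κ + d * α) ≠ 0 → Int.fract (κ + d * α) ≠ lam →
    y d = arcCode lam (κ + d * α)

/-- `ρ` is a phase for `y` on the circle `ℝ/ℤ`, with values in `[0, 1]`: its increments under
translation are constant modulo `1`, and it determines `y` away from the points `0` and `lam`. -/
structure IsCirclePhase (y : ℤ → Bool) (lam : ℝ) (ρ : ℤ → ℝ) : Prop where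
  lam_mem : lam ∈ Icc 0 1
  mem_Icc : ∀ d, ρ d ∈ Icc 0 1
  cocycle : ∀ d d', ∃ k : ℤ, ρ (d + d') + ρ 0 - ρ d - ρ d' = k
  eq_false : ∀ d, 0 < ρ d → ρ d < lam → y d = false
  eq_true : ∀ d, lam < ρ d → y d = true

theorem eq_of_add_mul_eq_intCast {α κ : ℝ} (hα : Irrational α) {d d' k k' : ℤ}
    (h : κ + d * α = k) (h' : κ + d' * α = k') : d = d' := by
  by_contra hne
  have hmul : ((d - d' : ℤ) : ℝ) * α = (k - k' : ℤ) := by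
    push_cast
    linarith
  exact (hmul ▸ hα.intCast_mul (sub_ne_zero.2 hne)).ne_int _ rfl

section Limit

open Filter Topology

variable {z : ℤ → Bool} {G E : ℕ → ℕ} {J : ℕ → ℤ → ℕ} {p : ℕ → ℤ} {l : Filter ℕ} {lam : ℝ}
  {ρ : ℤ → ℝ}

theorem tendsto_div_natCast_zero (hG : ∀ n, n ≤ G n) (hl : l ≤ atTop) (c : ℝ) :
    Tendsto (fun n => c / G n) l (𝓝 0) :=
  (tendsto_const_nhds.div_atTop (tendsto_natCast_atTop_atTop.comp
    (tendsto_atTop_mono hG tendsto_id))).mono_left hl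

theorem exists_tendsto_div (U : Ultrafilter ℕ) {a : ℕ → ℕ} (ha : ∀ n, a n ≤ 2 * G n) :
    ∃ r, Tendsto (fun n => (a n / G n : ℝ)) U (𝓝 r) := by
  have hmem : ∀ n, (a n / G n : ℝ) ∈ Icc 0 2 := fun n =>
    ⟨by positivity, div_le_of_le_mul₀ (by positivity) zero_le_two (by exact_mod_cast ha n)⟩
  obtain ⟨r, -, hr⟩ := isCompact_Icc.ultrafilter_le_nhds (U.map fun n => (a n / G n : ℝ))
    (le_principal_iff.2 (mem_map.2 (Eventually.of_forall hmem)))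
  exact ⟨r, hr⟩

theorem IsPhase.exists_abs_cocycle_le {n G E : ℕ} {J : ℤ → ℕ} (h : IsPhase z n G E J)
    (hn : 8 ≤ n) (p d d' : ℤ) : ∃ k : ℤ,
      |(J (p + d + d') + J p - J (p + d) - J (p + d') - k * G : ℤ)| ≤ 8 := by
  obtain ⟨k, hk⟩ := h.cocycle p d d'
  have hG := hn.trans h.le_length
  have := h.phase_le (p + d + d')
  have := h.phase_le p
  have := h.phase_le (p + d)
  have := h.phase_le (p + d')
  have hkG : |k| * G ≤ 2 * G + 6 + 2 * |k| := by
    rw [← Nat.abs_cast G, ← abs_mul, abs_le]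
    rw [abs_le] at hk
    constructor <;> rw [Nat.abs_cast] <;> omega
  refine ⟨k, hk.trans ?_⟩
  have : |k| ≤ 3 := by nlinarith [(by exact_mod_cast hG : (8 : ℤ) ≤ G)]
  omega

/-- Up to errors `O(1 / G)`, the increments of `J / G` are constant modulo the closed set `ℤ`. -/
theorem exists_intCast_eq_of_isPhase [l.NeBot] (h : ∀ n, IsPhase z (n + 8) (G n) (E n) (J n))
    (hl : l ≤ atTop) (hρ : ∀ d, Tendsto (fun n => (J n (p n + d) / G n : ℝ)) l (𝓝 (ρ d)))
    (d d' : ℤ) : ∃ k : ℤ, ρ (d + d') + ρ 0 - ρ d - ρ d' = k := by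
  choose k hk using fun n => (h n).exists_abs_cocycle_le (by omega) (p n) d d'
  have hlim : Tendsto (fun n => (k n : ℝ)) l (𝓝 (ρ (d + d') + ρ 0 - ρ d - ρ d')) := by
    refine tendsto_of_tendsto_of_dist ((((hρ (d + d')).add (hρ 0)).sub (hρ d)).sub (hρ d'))
      (squeeze_zero (fun _ => dist_nonneg) (fun n => ?_) (tendsto_div_natCast_zero
        (fun n => (n.le_add_right 8).trans (h n).le_length) hl 8))
    have hG : (0 : ℝ) < G n := by exact_mod_cast (Nat.succ_pos _).trans_le (h n).le_length
    rw [Real.dist_eq, ← add_assoc, add_zero, ← add_div, ← sub_div, ← sub_div,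
      div_sub' hG.ne', abs_div, abs_of_pos hG, mul_comm]
    gcongr
    exact_mod_cast hk n
  obtain ⟨k, hk⟩ := Int.isClosedEmbedding_coe_real.isClosed_range.mem_of_tendsto hlim
    (Eventually.of_forall fun n => mem_range_self (k n))
  exact ⟨k, hk.symm⟩

theorem isCirclePhase_of_tendsto [l.NeBot] (h : ∀ n, IsPhase z (n + 8) (G n) (E n) (J n))
    (hl : l ≤ atTop) (hlam : Tendsto (fun n => (E n / G n : ℝ)) l (𝓝 lam))
    (hρ : ∀ d, Tendsto (fun n => (J n (p n + d) / G n : ℝ)) l (𝓝 (ρ d))) {y : ℤ → Bool}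
    (hy : ∀ d, ∀ᶠ n in l, z (p n + d) = y d) : IsCirclePhase y lam ρ := by
  have hG : ∀ n, (0 : ℝ) < G n := fun n => by
    exact_mod_cast (Nat.succ_pos _).trans_le (h n).le_length
  have hsmall := tendsto_div_natCast_zero (fun n => (n.le_add_right 8).trans (h n).le_length) hl
  have hlt : ∀ {a b : ℕ → ℕ} {r s : ℝ}, Tendsto (fun n => (a n / G n : ℝ)) l (𝓝 r) →
      Tendsto (fun n => (b n / G n : ℝ)) l (𝓝 s) → r < s → ∀ᶠ n in l, a n + 3 ≤ b n := by
    intro a b r s ha hb hrs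
    filter_upwards [(ha.add (hsmall 3)).eventually_lt hb (by rwa [add_zero])] with n hn
    rw [← add_div, div_lt_div_iff_of_pos_right (hG n)] at hn
    exact_mod_cast hn.le
  refine ⟨⟨ge_of_tendsto' hlam fun n => by positivity, le_of_tendsto' hlam fun n =>
      div_le_one_of_le₀ (by exact_mod_cast (h n).arc_le) (hG n).le⟩,
    fun d => ⟨ge_of_tendsto' (hρ d) fun n => by positivity, ?_⟩,
    exists_intCast_eq_of_isPhase h hl hρ, fun d h0 h1 => ?_, fun d h1 => ?_⟩
  · refine le_of_tendsto' (by simpa using (hρ d).sub (hsmall 2)) fun n => ?_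
    rw [← sub_div, div_le_one (hG n), sub_le_iff_le_add]
    exact_mod_cast (h n).phase_le _
  · obtain ⟨n, hn, hpos, hE⟩ := ((hy d).and (((hρ d).eventually (lt_mem_nhds h0)).and
      (hlt (hρ d) hlam h1))).exists
    rw [← hn]
    exact (h n).eq_false _ (by exact_mod_cast (div_pos_iff_of_pos_right (hG n)).1 hpos) hE
  · obtain ⟨n, hn, hE⟩ := ((hy d).and (hlt hlam (hρ d) h1)).exists
    rw [← hn]
    exact (h n).eq_true _ hE

theorem exists_isCirclePhase (h : ∀ n, IsPhase z (n + 8) (G n) (E n) (J n)) :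
    ∃ y lam ρ, OccursIn y z ∧ IsCirclePhase y lam ρ ∧ ρ 0 ∈ Ioo 0 1 ∧ ρ 0 ≠ lam := by
  let U : Ultrafilter ℕ := hyperfilter ℕ
  have hU : (U : Filter ℕ) ≤ atTop := Nat.hyperfilter_le_atTop
  have hG : ∀ n, 8 ≤ G n := fun n => (Nat.le_add_left 8 n).trans (h n).le_length
  obtain ⟨lam, hlam⟩ := exists_tendsto_div (G := G) U (a := E) fun n =>
    (h n).arc_le.trans (by omega)
  obtain ⟨κ, hκ0, hκ1, hκ⟩ : ∃ κ : ℝ, 0 < κ ∧ κ < 1 ∧ κ ≠ lam := by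
    obtain ⟨κ, hκ, hne⟩ := ((Ioo_infinite (zero_lt_one' ℝ)).sdiff (finite_singleton lam)).nonempty
    exact ⟨κ, hκ.1, hκ.2, hne⟩
  choose p hp using fun n => (h n).exists_eq ⌊κ * G n⌋₊ ((Nat.floor_lt (by positivity)).2
    (mul_lt_of_lt_one_left (by exact_mod_cast (hG n).trans_lt' (by norm_num)) hκ1))
  choose ρ hρ using fun d => exists_tendsto_div U (a := fun n => J n (p n + d)) (G := G) fun n =>
    ((h n).phase_le _).trans (by have := hG n; omega)
  choose y hy using fun d : ℤ => show ∃ b, ∀ᶠ n in (U : Filter ℕ), z (p n + d) = b from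
    (U.em fun n => z (p n + d) = true).elim (fun ht => ⟨true, ht⟩)
      fun hf => ⟨false, hf.mono fun _ => Bool.eq_false_of_not_eq_true⟩
  have hρ0 : ρ 0 = κ := by
    refine tendsto_nhds_unique (hρ 0) ?_
    simp only [add_zero, hp]
    exact ((tendsto_nat_floor_mul_div_atTop hκ0.le).comp (tendsto_natCast_atTop_atTop.comp
      (tendsto_atTop_mono (fun n => (n.le_add_right 8).trans (h n).le_length)
        tendsto_id))).mono_left hU
  refine ⟨y, lam, ρ, fun R => ?_, isCirclePhase_of_tendsto h hU hlam hρ hy,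
    by rw [hρ0]; exact ⟨hκ0, hκ1⟩, by rwa [hρ0]⟩
  obtain ⟨n, hn⟩ := ((eventually_all_finset (Finset.Icc (-R) R)).2 fun i _ => hy i).exists
  exact ⟨p n, fun i hi => hn i (Finset.mem_Icc.2 (abs_le.1 hi))⟩

end Limit

namespace IsCirclePhase

variable {y : ℤ → Bool} {lam : ℝ} {ρ : ℤ → ℝ}

theorem exists_eq_add_mul (h : IsCirclePhase y lam ρ) (d : ℤ) :
    ∃ k : ℤ, ρ d = ρ 0 + d * (ρ 1 - ρ 0) + k := by
  induction d using Int.induction_on with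
  | zero => exact ⟨0, by simp⟩
  | succ i ih =>
    obtain ⟨k, hk⟩ := ih
    obtain ⟨k', hk'⟩ := h.cocycle i 1
    refine ⟨k + k', ?_⟩
    push_cast at hk ⊢
    linarith
  | pred i ih =>
    obtain ⟨k, hk⟩ := ih
    obtain ⟨k', hk'⟩ := h.cocycle (-i - 1) 1
    refine ⟨k - k', ?_⟩
    rw [sub_add_cancel] at hk'
    push_cast at hk ⊢
    linarith

theorem eq_fract (h : IsCirclePhase y lam ρ) {d : ℤ}
    (hd : Int.fract (ρ 0 + d * (ρ 1 - ρ 0)) ≠ 0) :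
    ρ d = Int.fract (ρ 0 + d * (ρ 1 - ρ 0)) := by
  obtain ⟨k, hk⟩ := h.exists_eq_add_mul d
  have hfract : Int.fract (ρ d) = Int.fract (ρ 0 + d * (ρ 1 - ρ 0)) := by
    rw [hk, Int.fract_add_intCast]
  rw [← hfract] at hd ⊢
  refine (Int.fract_eq_self.2 ⟨(h.mem_Icc d).1, (h.mem_Icc d).2.lt_of_ne fun h1 => hd ?_⟩).symm
  rw [h1, Int.fract_one]

variable (hy : ∀ (Q s : ℤ) (b : Bool), 0 < Q → ¬ ∀ k : ℕ, y (s + k * Q) = b)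
include hy

theorem irrational (h : IsCirclePhase y lam ρ) (h0 : ρ 0 ∈ Ioo 0 1) (hne : ρ 0 ≠ lam) :
    Irrational (ρ 1 - ρ 0) := by
  rintro ⟨a, ha⟩
  have hden : (0 : ℤ) < a.den := by exact_mod_cast a.den_pos
  have hconst : ∀ k : ℕ, ρ (0 + k * a.den) = ρ 0 := fun k => by
    have hfract : Int.fract (ρ 0 + (0 + k * a.den : ℤ) * (ρ 1 - ρ 0)) = ρ 0 := by
      have hmul : (a.den : ℝ) * (ρ 1 - ρ 0) = a.num := by
        rw [← ha]
        exact_mod_cast Rat.den_mul_eq_num a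
      rw [show ((0 + k * a.den : ℤ) : ℝ) * (ρ 1 - ρ 0) = (k * a.num : ℤ) by
        push_cast
        rw [zero_add, mul_assoc, hmul], Int.fract_add_intCast,
        Int.fract_eq_self.2 ⟨h0.1.le, h0.2⟩]
    rw [h.eq_fract (by rw [hfract]; exact h0.1.ne'), hfract]
  rcases hne.lt_or_gt with hlt | hgt
  · exact hy _ 0 false hden fun k => h.eq_false _ (by rw [hconst]; exact h0.1) (by rwa [hconst])
  · exact hy _ 0 true hden fun k => h.eq_true _ (by rwa [hconst])

theorem exists_forall_ge_mem_Ioo (h : IsCirclePhase y lam ρ) (h0 : ρ 0 ∈ Ioo 0 1)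
    (hne : ρ 0 ≠ lam) : ∃ s : ℤ, ∀ d, s ≤ d → ρ d ∈ Ioo 0 1 := by
  have hmem : ∀ d : ℤ, Int.fract (ρ 0 + d * (ρ 1 - ρ 0)) ≠ 0 → ρ d ∈ Ioo 0 1 := fun d hd => by
    rw [h.eq_fract hd]
    exact ⟨(Int.fract_nonneg _).lt_of_ne' hd, Int.fract_lt_one _⟩
  by_cases hzero : ∃ d : ℤ, Int.fract (ρ 0 + d * (ρ 1 - ρ 0)) = 0
  · obtain ⟨d₀, hd₀⟩ := hzero
    refine ⟨d₀ + 1, fun d hd => hmem d fun hd' => ?_⟩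
    obtain ⟨k, hk⟩ := Int.fract_eq_zero_iff.1 hd₀
    obtain ⟨k', hk'⟩ := Int.fract_eq_zero_iff.1 hd'
    have := eq_of_add_mul_eq_intCast (h.irrational hy h0 hne) hk.symm hk'.symm
    omega
  · push Not at hzero
    exact ⟨0, fun d _ => hmem d (hzero d)⟩

theorem isRotationCoding (h : IsCirclePhase y lam ρ) (h0 : ρ 0 ∈ Ioo 0 1) (hne : ρ 0 ≠ lam) :
    IsRotationCoding y (ρ 1 - ρ 0) lam (ρ 0) := by
  obtain ⟨s, hs⟩ := h.exists_forall_ge_mem_Ioo hy h0 hne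
  refine ⟨h.irrational hy h0 hne, h.lam_mem.1.lt_of_ne ?_, h.lam_mem.2.lt_of_ne ?_,
    fun d hd0 hdl => ?_⟩
  · rintro rfl
    exact hy 1 s true one_pos fun k => h.eq_true _ (hs _ (by omega)).1
  · rintro rfl
    exact hy 1 s false one_pos fun k => h.eq_false _ (hs _ (by omega)).1 (hs _ (by omega)).2
  · have hpos := (Int.fract_nonneg _).lt_of_ne' hd0
    rw [← h.eq_fract hd0] at hpos hdl
    rw [arcCode, ← h.eq_fract hd0]
    rcases hdl.lt_or_gt with hlt | hgt
    · rw [h.eq_false d hpos hlt, decide_eq_false hlt.not_ge]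
    · rw [h.eq_true d hgt, decide_eq_true hgt.le]

end IsCirclePhase

section Rotation

variable {y z : ℤ → Bool}

theorem NoConstantClass.not_forall_of_occursIn (hNC : NoConstantClass z)
    (hz : TotallyUniformlyRecurrent z) (hyz : OccursIn y z) (Q s : ℤ) (b : Bool) (hQ : 0 < Q) :
    ¬ ∀ k : ℕ, y (s + k * Q) = b := by
  intro hconst
  obtain ⟨K, hK⟩ := hNC.exists_bounded_return hz hQ
  obtain ⟨q, hq⟩ := hyz (|s| + K * Q)
  obtain ⟨k, hk, hkb⟩ := hK (q + s) (!b)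
  rw [add_assoc, hq (s + k * Q) ((abs_add_le _ _).trans (by
    rw [abs_of_nonneg (by positivity : (0 : ℤ) ≤ k * Q)]
    gcongr)), hconst k] at hkb
  exact Bool.not_ne_self b hkb.symm

theorem NoConstantClass.exists_isRotationCoding (hNC : NoConstantClass z)
    (hz : TotallyUniformlyRecurrent z) (hW : WindowBound z) :
    ∃ y α lam κ, OccursIn y z ∧ IsRotationCoding y α lam κ := by
  choose G E J h using fun n : ℕ => hNC.exists_isPhase hz hW (n := n + 8) (by omega)
  obtain ⟨y, lam, ρ, hyz, hρ, h0, hne⟩ := exists_isCirclePhase h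
  exact ⟨y, _, lam, _, hyz, hρ.isRotationCoding (hNC.not_forall_of_occursIn hz hyz) h0 hne⟩

end Rotation

/-! ### Codings of an irrational rotation -/

theorem fract_add_eq {r e : ℝ} (h0 : 0 ≤ Int.fract r + e) (h1 : Int.fract r + e < 1) :
    Int.fract (r + e) = Int.fract r + e :=
  Int.fract_eq_iff.2 ⟨h0, h1, ⌊r⌋, by rw [Int.fract]; ring⟩

theorem exists_bound_fract_add_mul_lt {α ε : ℝ} (hα : Irrational α) (hε : 0 < ε) :
    ∃ N : ℕ, ∀ y : ℝ, ∃ j ≤ N, 0 < Int.fract (y + j * α) ∧ Int.fract (y + j * α) < ε := by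
  have hdense : DenseRange fun j : ℕ => j • (α : UnitAddCircle) :=
    denseRange_zsmul_iff_nsmul.1 (AddCircle.denseRange_zsmul_coe_iff.2 (by rwa [div_one]))
  let V : Set UnitAddCircle := (fun r : ℝ => (r : UnitAddCircle)) '' Ioo 0 (min ε 1)
  have hV : IsOpen V := QuotientAddGroup.isOpenMap_coe _ isOpen_Ioo
  have hVne : V.Nonempty := (nonempty_Ioo.2 (lt_min hε one_pos)).image _
  obtain ⟨F, hF⟩ := isCompact_univ.elim_finite_subcover
    (fun j : ℕ => (fun w => w + j • (α : UnitAddCircle)) ⁻¹' V)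
    (fun j => hV.preimage (continuous_add_const _)) fun w _ => by
      obtain ⟨j, hj⟩ := hdense.exists_mem_open (hV.preimage (continuous_const_add w))
        (hVne.preimage (add_left_surjective w))
      exact mem_iUnion.2 ⟨j, hj⟩
  refine ⟨F.sup id, fun y => ?_⟩
  obtain ⟨j, hj, r, ⟨hr0, hr1⟩, hr⟩ := mem_iUnion₂.1 (hF (mem_univ (y : UnitAddCircle)))
  have hfract : Int.fract (y + j * α) = r := by
    change (r : UnitAddCircle) = y + j • (α : UnitAddCircle) at hr
    rw [← AddCircle.coe_nsmul, ← AddCircle.coe_add, ← sub_eq_zero, ← AddCircle.coe_sub,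
      AddCircle.coe_eq_zero_iff] at hr
    obtain ⟨k, hk⟩ := hr
    rw [zsmul_one, nsmul_eq_mul] at hk
    exact Int.fract_eq_iff.2 ⟨hr0.le, hr1.trans_le (min_le_right _ _), -k, by
      push_cast
      linarith⟩
  exact ⟨j, Finset.le_sup (f := id) hj, hfract ▸ hr0, hfract ▸ hr1.trans_le (min_le_left _ _)⟩

theorem exists_fract_add_mul_of_eventually {α : ℝ} (hα : Irrational α) (y : ℝ) {P : ℝ → Prop}
    (hP : ∀ᶠ e in nhdsWithin 0 (Ioi 0), P e) : ∃ j : ℕ, P (Int.fract (y + j * α)) := by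
  obtain ⟨ε, hε, hεP⟩ := mem_nhdsGT_iff_exists_Ioo_subset.1 hP
  obtain ⟨N, hN⟩ := exists_bound_fract_add_mul_lt hα hε
  obtain ⟨j, -, hj⟩ := hN y
  exact ⟨j, hεP hj⟩

section ArcCode

variable {lam : ℝ}

theorem arcCode_add_intCast (r : ℝ) (k : ℤ) : arcCode lam (r + k) = arcCode lam r := by
  rw [arcCode, arcCode, Int.fract_add_intCast]

theorem arcCode_eq_false {r : ℝ} (hlam : lam < 1) (h0 : 0 ≤ r) (h1 : r < lam) :
    arcCode lam r = false := by
  rw [arcCode, Int.fract_eq_self.2 ⟨h0, h1.trans hlam⟩, decide_eq_false h1.not_ge]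

theorem arcCode_eq_true {r : ℝ} (hlam : 0 < lam) (h0 : lam ≤ r) (h1 : r < 1) :
    arcCode lam r = true := by
  rw [arcCode, Int.fract_eq_self.2 ⟨hlam.le.trans h0, h1⟩, decide_eq_true h0]

theorem eventually_arcCode_add_eq (hlam : 0 < lam) (r : ℝ) :
    ∀ᶠ e in nhdsWithin 0 (Ioi 0), arcCode lam (r + e) = arcCode lam r ∧
      Int.fract (r + e) ≠ 0 ∧ Int.fract (r + e) ≠ lam := by
  have h0 := Int.fract_nonneg r
  have h1 := Int.fract_lt_one r
  have hend : 0 < (if Int.fract r < lam then min lam 1 else 1) - Int.fract r := by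
    split_ifs with h
    · exact sub_pos.2 (lt_min h h1)
    · exact sub_pos.2 h1
  filter_upwards [Ioo_mem_nhdsGT hend] with e ⟨he0, he1⟩
  have hmin := min_le_left lam 1
  have hmin' := min_le_right lam 1
  rw [arcCode, arcCode, fract_add_eq (by linarith) (by split_ifs at he1 <;> linarith),
    decide_eq_decide]
  split_ifs at he1 with h
  · exact ⟨⟨fun _ => by linarith, fun _ => by linarith⟩, by linarith, by linarith⟩
  · exact ⟨⟨fun _ => by linarith, fun _ => by linarith⟩, by linarith, by linarith⟩

theorem eventually_arcCode_eq {r : ℝ} (h0 : Int.fract r ≠ 0) (h1 : Int.fract r ≠ lam) :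
    ∀ᶠ e in nhds 0, arcCode lam (r + e) = arcCode lam r := by
  have hlim : Filter.Tendsto (fun e => Int.fract r + e) (nhds 0) (nhds (Int.fract r)) := by
    simpa using (continuous_const_add (Int.fract r)).tendsto 0
  have hside : ∀ᶠ f in nhds (Int.fract r), (lam ≤ f ↔ lam ≤ Int.fract r) := by
    rcases h1.lt_or_gt with h | h
    · filter_upwards [gt_mem_nhds h] with f hf
      exact iff_of_false hf.not_ge h.not_ge
    · filter_upwards [lt_mem_nhds h] with f hf
      exact iff_of_true hf.le h.le
  have hpos := (Int.fract_nonneg r).lt_of_ne' h0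
  filter_upwards [hlim.eventually (lt_mem_nhds hpos),
    hlim.eventually (gt_mem_nhds (Int.fract_lt_one r)), hlim.eventually hside] with e he0 he1 he
  rw [arcCode, arcCode, fract_add_eq he0.le he1, decide_eq_decide, he]

theorem arcCode_sub_ne {c e : ℝ} (hc : c = 0 ∨ c = lam) (h0 : 0 < e) (h1 : e ≤ lam)
    (h2 : e ≤ 1 - lam) : arcCode lam (c - e) ≠ arcCode lam c := by
  rcases hc with rfl | rfl
  · rw [arcCode_eq_false (r := 0) (by linarith) le_rfl (by linarith),
      ← arcCode_add_intCast (0 - e) 1,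
      arcCode_eq_true (by linarith) (by push_cast; linarith) (by push_cast; linarith)]
    decide
  · rw [arcCode_eq_false (by linarith) (by linarith) (by linarith),
      arcCode_eq_true (by linarith) le_rfl (by linarith)]
    decide

/-- The points `s α` with `s ∈ τ` are `ε`-dense in the circle: every half-open arc of length `ε`
contains one of them. -/
def IsFractDense (α ε : ℝ) (τ : Finset ℤ) : Prop :=
  ∀ y : ℝ, ∃ s ∈ τ, Int.fract (y + s * α) < ε

variable {α ε : ℝ} {τ τ' : Finset ℤ}

theorem IsFractDense.mono (h : IsFractDense α ε τ) (hτ : τ ⊆ τ') : IsFractDense α ε τ' :=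
  fun y => (h y).imp fun _ hs => ⟨hτ hs.1, hs.2⟩

theorem isFractDense_image_mul {Q a b : ℤ} {N : ℕ}
    (hN : ∀ y : ℝ, ∃ j ≤ N, Int.fract (y + j * (Q * α)) < ε) (hab : a + N ≤ b) :
    IsFractDense α ε ((Finset.Icc a b).image (· * Q)) := by
  intro y
  obtain ⟨j, hj, hlt⟩ := hN (y + a * (Q * α))
  refine ⟨(a + j) * Q, Finset.mem_image_of_mem _ (Finset.mem_Icc.2 ⟨by omega, by omega⟩), ?_⟩
  convert hlt using 2
  push_cast
  ring

theorem exists_arcCode_add_ne (h0 : 0 < lam) (h1 : lam < 1) (hε : ε ≤ lam) (hε' : ε ≤ 1 - lam)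
    {D : ℝ} (hD : ε ≤ D) (hD' : D ≤ 1 - ε) :
    ∃ c, ∀ f, 0 ≤ f → f < ε → arcCode lam (c + f) ≠ arcCode lam (c + D + f) := by
  by_cases hD1 : D ≤ 1 - lam
  · refine ⟨-D, fun f hf hfε => ?_⟩
    rw [arcCode_eq_false (r := -D + D + f) h1 (by linarith) (by linarith),
      ← arcCode_add_intCast _ 1,
      arcCode_eq_true h0 (by push_cast; linarith) (by push_cast; linarith)]
    decide
  by_cases hDlam : lam ≤ D
  · refine ⟨0, fun f hf hfε => ?_⟩
    rw [arcCode_eq_false h1 (by linarith) (by linarith),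
      arcCode_eq_true h0 (by linarith) (by linarith)]
    decide
  · refine ⟨lam - D, fun f hf hfε => ?_⟩
    rw [arcCode_eq_false h1 (by linarith) (by linarith),
      arcCode_eq_true h0 (by linarith) (by linarith)]
    decide

theorem IsFractDense.exists_abs_sub_lt (hτ : IsFractDense α ε τ) (h0 : 0 < lam) (h1 : lam < 1)
    (hε : ε ≤ lam) (hε' : ε ≤ 1 - lam) {p p' : ℝ}
    (h : ∀ s ∈ τ, arcCode lam (p + s * α) = arcCode lam (p' + s * α)) :
    ∃ k : ℤ, |p' - p - k| < ε := by
  by_contra! hfar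
  have hD : ε ≤ Int.fract (p' - p) := (hfar ⌊p' - p⌋).trans (abs_of_nonneg (Int.fract_nonneg _)).le
  have hD' : Int.fract (p' - p) ≤ 1 - ε := by
    have hceil := hfar (⌊p' - p⌋ + 1)
    rw [show p' - p - (⌊p' - p⌋ + 1 : ℤ) = Int.fract (p' - p) - 1 by
      rw [Int.fract]
      push_cast
      ring, abs_of_neg (sub_neg.2 (Int.fract_lt_one _))] at hceil
    linarith
  obtain ⟨c, hc⟩ := exists_arcCode_add_ne h0 h1 hε hε' hD hD'
  obtain ⟨s, hs, hlt⟩ := hτ (p - c)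
  refine hc _ (Int.fract_nonneg _) hlt ?_
  rw [← arcCode_add_intCast _ ⌊p - c + s * α⌋,
    ← arcCode_add_intCast (c + Int.fract (p' - p) + _) (⌊p - c + s * α⌋ + ⌊p' - p⌋)]
  convert h s hs using 2 <;> simp only [Int.fract] <;> push_cast <;> ring

theorem exists_forall_abs_eq_of_mul_sub_eq (hα : Irrational α) (h0 : 0 < lam) (h1 : lam < 1) :
    ∃ K : ℤ, 0 < K ∧ ∀ d k : ℤ, d * α - lam = k → |d| = K := by
  by_cases h : ∃ c k : ℤ, c * α - lam = k
  · obtain ⟨c, k, hc⟩ := h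
    refine ⟨|c|, abs_pos.2 ?_, fun d k' hd => ?_⟩
    · rintro rfl
      have hk : (-1 : ℝ) < k ∧ (k : ℝ) < 0 := by
        rw [← hc, Int.cast_zero, zero_mul, zero_sub]
        exact ⟨neg_lt_neg h1, neg_neg_of_pos h0⟩
      have : -1 < k ∧ k < 0 := by exact_mod_cast hk
      omega
    · rw [eq_of_add_mul_eq_intCast (κ := -lam) hα ((neg_add_eq_sub _ _).trans hd)
        ((neg_add_eq_sub _ _).trans hc)]
  · push Not at h
    exact ⟨1, one_pos, fun d k hd => (h d k hd).elim⟩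

/-- The phase that meets the endpoint `0` (or `lam`, if `i.2` holds) of the arc at time `i.1`. -/
noncomputable def criticalPhase (α lam : ℝ) (i : ℤ × Bool) : ℝ :=
  (if i.2 then lam else 0) - i.1 * α

theorem criticalPhase_sub_ne_intCast (hα : Irrational α) {K : ℤ}
    (hK : ∀ d k : ℤ, d * α - lam = k → |d| = K) {i j : ℤ × Bool} (hij : i ≠ j)
    (hd : |i.1 - j.1| ≠ K) (k : ℤ) : criticalPhase α lam j - criticalPhase α lam i ≠ k := by
  intro hk
  obtain ⟨s, b⟩ := i
  obtain ⟨s', b'⟩ := j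
  have hsame : ((s - s' : ℤ) : ℝ) * α = k → s = s' := fun h => by
    have := eq_of_add_mul_eq_intCast (κ := 0) hα (d' := 0) (k' := 0) ((zero_add _).trans h)
      (by simp)
    omega
  cases b <;> cases b' <;> simp only [criticalPhase, Bool.false_eq_true, if_false, if_true] at hk
  · exact hij (congrArg (·, _) (hsame (by push_cast; linarith)))
  · exact hd (by rw [abs_sub_comm]; exact hK _ (-k) (by push_cast; linarith))
  · exact hd (hK _ k (by push_cast; linarith))
  · exact hij (congrArg (·, _) (hsame (by push_cast; linarith)))

theorem arcCode_ne_criticalPhase (hε : ε ≤ lam) (hε' : ε ≤ 1 - lam) (i : ℤ × Bool) {p : ℝ} {k : ℤ}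
    (h0 : 0 < criticalPhase α lam i - p - k) (h1 : criticalPhase α lam i - p - k < ε) :
    arcCode lam (p + i.1 * α) ≠ arcCode lam (criticalPhase α lam i + i.1 * α) := by
  have hne := arcCode_sub_ne (c := criticalPhase α lam i + i.1 * α)
    (by rw [criticalPhase, sub_add_cancel]; cases i.2 <;> simp) h0 (h1.le.trans hε)
    (h1.le.trans hε')
  rwa [show criticalPhase α lam i + i.1 * α - (criticalPhase α lam i - p - k) =
    p + i.1 * α + k by ring, arcCode_add_intCast] at hne

theorem exists_arcCode_criticalPhase_ne (hα : Irrational α) (hτ : IsFractDense α ε τ)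
    (h0 : 0 < lam) (h1 : lam < 1) (hε : ε ≤ lam) (hε' : ε ≤ 1 - lam) {K : ℤ}
    (hK : ∀ d k : ℤ, d * α - lam = k → |d| = K)
    {i j : ℤ × Bool} (hi : i.1 ∈ τ) (hj : j.1 ∈ τ) (hij : i ≠ j) (hd : |i.1 - j.1| ≠ K) :
    ∃ s ∈ τ, arcCode lam (criticalPhase α lam i + s * α) ≠
      arcCode lam (criticalPhase α lam j + s * α) := by
  by_contra! hall
  obtain ⟨k, hk⟩ := hτ.exists_abs_sub_lt h0 h1 hε hε' hall
  have hne := sub_ne_zero.2 (criticalPhase_sub_ne_intCast hα hK hij hd k)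
  rw [abs_lt] at hk
  rcases hne.lt_or_gt with hlt | hgt
  · exact arcCode_ne_criticalPhase hε hε' i (k := -k) (by push_cast; linarith)
      (by push_cast; linarith) (hall _ hi).symm
  · exact arcCode_ne_criticalPhase hε hε' j hgt hk.2 (hall _ hj)

end ArcCode

/-! ### Transfer of the coding to the nonrecurrent sequence -/

section Transfer

variable {X y : ℤ → Bool} {α lam κ β ε : ℝ} {τ : Finset ℤ} {K L : ℤ}

theorem IsRotationCoding.exists_forall_eq_arcCode (h : IsRotationCoding y α lam κ) (p : ℝ)
    (τ : Finset ℤ) : ∃ m : ℤ, ∀ s ∈ τ, y (m + s) = arcCode lam (p + s * α) := by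
  obtain ⟨j, hj⟩ := exists_fract_add_mul_of_eventually h.irrational (κ - p)
    ((Filter.eventually_all_finset τ).2 fun s _ => eventually_arcCode_add_eq h.pos (p + s * α))
  refine ⟨j, fun s hs => ?_⟩
  obtain ⟨heq, h0, h1⟩ := hj s hs
  have hfract : p + s * α + Int.fract (κ - p + j * α) =
      κ + ((j + s : ℤ) : ℝ) * α + (-⌊κ - p + j * α⌋ : ℤ) := by
    rw [Int.fract]
    push_cast
    ring
  rw [hfract, Int.fract_add_intCast] at h0 h1
  rw [hfract, arcCode_add_intCast] at heq
  rw [h.eq_arcCode _ h0 h1, heq]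

/-- Through `τ` the `2 |τ|` critical phases show pairwise different patterns, all of which occur
in `X`; by the window bound the initial pattern of `X` is not a further one. -/
theorem OneSidedWindowBound.exists_forall_eq_arcCode (hX : OneSidedWindowBound X)
    (hyX : OccursLateIn y X) (h : IsRotationCoding y α lam κ) (hτ : IsFractDense α ε τ)
    (hε : ε ≤ lam) (hε' : ε ≤ 1 - lam) (hK : ∀ d k : ℤ, d * α - lam = k → |d| = K)
    (hdiff : ∀ s ∈ τ, ∀ s' ∈ τ, |s - s'| ≠ K) (hnonneg : ∀ s ∈ τ, 0 ≤ s) :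
    ∃ p : ℝ, ∀ s ∈ τ, X s = arcCode lam (p + s * α) := by
  by_contra! hne
  let pattern : Option (τ × Bool) → ℤ → Bool := fun o => o.elim X fun i s =>
    arcCode lam (criticalPhase α lam (i.1, i.2) + s * α)
  obtain ⟨s₀, hs₀, -⟩ := hτ 0
  have hcard := hX (Option (τ × Bool)) pattern τ ⟨s₀, hs₀⟩ ?_ ?_
  · rw [Fintype.card_option, Fintype.card_prod, Fintype.card_coe, Fintype.card_bool] at hcard
    omega
  · rintro (_ | i)
    · exact ⟨0, fun s hs => ⟨by simpa using hnonneg s hs, congrArg X (zero_add s)⟩⟩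
    · obtain ⟨m, hm⟩ := h.exists_forall_eq_arcCode (criticalPhase α lam (i.1, i.2)) τ
      obtain ⟨R, -, hR⟩ := exists_forall_mem_abs_le τ (m + ·)
      obtain ⟨q, hq, hqy⟩ := hyX R R
      refine ⟨q + m, fun s hs => ?_⟩
      have hms := hR s hs
      rw [add_assoc, hqy _ hms]
      exact ⟨by linarith [neg_abs_le (m + s)], hm s hs⟩
  · rintro (_ | i) (_ | j) hij
    · exact (hij rfl).elim
    · exact hne _
    · exact (hne _).imp fun s hs => ⟨hs.1, hs.2.symm⟩
    · exact exists_arcCode_criticalPhase_ne h.irrational hτ h.pos h.lt_one hε hε' hK i.1.2 j.1.2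
        (fun hp => hij (congrArg some (Prod.ext (Subtype.ext (Prod.ext_iff.1 hp).1)
          (Prod.ext_iff.1 hp).2))) (hdiff _ i.1.2 _ j.1.2)

theorem abs_mul_two_mul_sub_ne (hK : 0 < K) (i j : ℤ) : |i * (2 * K) - j * (2 * K)| ≠ K := by
  rw [← sub_mul, abs_mul, abs_of_pos (by omega : 0 < 2 * K)]
  intro h
  have := mul_right_cancel₀ hK.ne' (show |i - j| * 2 * K = 1 * K by linarith)
  omega

theorem exists_isFractDense_image_mul (hα : Irrational α) (hε : 0 < ε) (hK : 0 < K) :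
    ∃ N : ℕ, ∀ a : ℤ, IsFractDense α ε ((Finset.Icc a (a + N)).image (· * (2 * K))) := by
  obtain ⟨N, hN⟩ := exists_bound_fract_add_mul_lt
    (hα.intCast_mul (by omega : 2 * K ≠ 0)) hε
  exact ⟨N, fun a => isFractDense_image_mul (fun y => (hN y).imp fun _ hj => ⟨hj.1, hj.2.2⟩) le_rfl⟩

theorem OneSidedWindowBound.exists_phase_multiples (hX : OneSidedWindowBound X)
    (hyX : OccursLateIn y X) (h : IsRotationCoding y α lam κ) (hK0 : 0 < K)
    (hK : ∀ d k : ℤ, d * α - lam = k → |d| = K) (n : ℕ) :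
    ∃ p ∈ Icc (0 : ℝ) 1, ∀ s ∈ (Finset.Icc 0 (n : ℤ)).image (· * (2 * K)),
      X s = arcCode lam (p + s * α) := by
  obtain ⟨N, hN⟩ := exists_isFractDense_image_mul h.irrational
    (lt_min h.pos (sub_pos.2 h.lt_one)) hK0
  have hsub : ∀ {a b a' b' : ℤ}, a' ≤ a → b ≤ b' → (Finset.Icc a b).image (· * (2 * K)) ⊆
      (Finset.Icc a' b').image (· * (2 * K)) := fun ha hb =>
    Finset.image_subset_image (Finset.Icc_subset_Icc ha hb)
  obtain ⟨p, hp⟩ := hX.exists_forall_eq_arcCode hyX h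
    ((hN 0).mono (hsub le_rfl (by omega : 0 + (N : ℤ) ≤ n + N))) (min_le_left _ _)
    (min_le_right _ _) hK
    (Finset.forall_mem_image.2 fun i _ => Finset.forall_mem_image.2 fun j _ =>
      abs_mul_two_mul_sub_ne hK0 i j)
    (Finset.forall_mem_image.2 fun i hi => mul_nonneg (Finset.mem_Icc.1 hi).1 (by omega))
  refine ⟨Int.fract p, ⟨Int.fract_nonneg p, (Int.fract_lt_one p).le⟩, fun s hs => ?_⟩
  rw [hp s (hsub le_rfl (by omega) hs), ← arcCode_add_intCast (Int.fract p + s * α) ⌊p⌋, Int.fract]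
  congr 1
  ring

theorem OneSidedWindowBound.exists_phase_insert (hX : OneSidedWindowBound X)
    (hyX : OccursLateIn y X) (h : IsRotationCoding y α lam κ) (hK0 : 0 < K)
    (hK : ∀ d k : ℤ, d * α - lam = k → |d| = K) (hε : 0 < ε) {m : ℤ} (hm : 0 ≤ m) :
    ∃ N : ℕ, ∀ p : ℝ, (∀ s ∈ (Finset.Icc 0 (N : ℤ)).image (· * (2 * K)),
      X s = arcCode lam (p + s * α)) → ∃ r, |r - p| < ε ∧ X m = arcCode lam (r + m * α) := by
  have hδ : 0 < min ε (min lam (1 - lam)) := lt_min hε (lt_min h.pos (sub_pos.2 h.lt_one))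
  have hδ0 := (min_le_right ε _).trans (min_le_left lam (1 - lam))
  have hδ1 := (min_le_right ε _).trans (min_le_right lam (1 - lam))
  obtain ⟨N, hN⟩ := exists_isFractDense_image_mul h.irrational hδ hK0
  set τ := (Finset.Icc (m + K + 1) (m + K + 1 + N)).image (· * (2 * K))
  have hfar : ∀ s ∈ τ, m + K < s := Finset.forall_mem_image.2 fun i hi => by
    have := (Finset.mem_Icc.1 hi).1
    nlinarith
  have hdiff : ∀ s ∈ insert m τ, ∀ s' ∈ insert m τ, |s - s'| ≠ K := by
    intro s hs s' hs'
    rcases Finset.mem_insert.1 hs with rfl | hs <;> rcases Finset.mem_insert.1 hs' with rfl | hs'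
    · rw [sub_self, abs_zero]
      exact hK0.ne
    · rw [abs_of_neg (by linarith [hfar s' hs'])]
      linarith [hfar s' hs']
    · rw [abs_of_pos (by linarith [hfar s hs])]
      linarith [hfar s hs]
    · obtain ⟨i, -, rfl⟩ := Finset.mem_image.1 hs
      obtain ⟨j, -, rfl⟩ := Finset.mem_image.1 hs'
      exact abs_mul_two_mul_sub_ne hK0 i j
  obtain ⟨p', hp'⟩ := hX.exists_forall_eq_arcCode hyX h (τ := insert m τ)
    ((hN _).mono (Finset.subset_insert m τ)) hδ0 hδ1 hK hdiff
    (Finset.forall_mem_insert _ _ _ |>.2 ⟨hm, fun s hs => by have := hfar s hs; omega⟩)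
  refine ⟨(m + K + 1).toNat + N, fun p hp => ?_⟩
  obtain ⟨k, hk⟩ := (hN (m + K + 1)).exists_abs_sub_lt h.pos h.lt_one hδ0 hδ1
    (p := p) (p' := p') fun s hs => by
      rw [← hp' s (Finset.mem_insert_of_mem hs), hp s (Finset.image_subset_image
        (Finset.Icc_subset_Icc (by omega) (by push_cast; omega)) hs)]
  refine ⟨p' - k, by rw [sub_right_comm]; exact hk.trans_le (min_le_left _ _), ?_⟩
  rw [hp' m (Finset.mem_insert_self m τ), ← arcCode_add_intCast (p' - k + m * α) k]
  congr 1
  ring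

/-- `X` is coded with phase `β` away from the visits to the endpoints `0` and `lam` of the arc. -/
def IsCodedOffEndpoints (X : ℤ → Bool) (α lam β : ℝ) : Prop :=
  ∀ m : ℤ, 0 ≤ m → Int.fract (β + m * α) ≠ 0 → Int.fract (β + m * α) ≠ lam →
    X m = arcCode lam (β + m * α)

theorem OneSidedWindowBound.exists_isCodedOffEndpoints (hX : OneSidedWindowBound X)
    (hyX : OccursLateIn y X) (h : IsRotationCoding y α lam κ) :
    ∃ β, IsCodedOffEndpoints X α lam β := by
  obtain ⟨K, hK0, hK⟩ := exists_forall_abs_eq_of_mul_sub_eq h.irrational h.pos h.lt_one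
  choose p hp hpX using hX.exists_phase_multiples hyX h hK0 hK
  obtain ⟨β, -, φ, hφ, hlim⟩ := isCompact_Icc.tendsto_subseq hp
  refine ⟨β, fun m hm h0 h1 => ?_⟩
  obtain ⟨ε, hε, hball⟩ := Metric.eventually_nhds_iff.1 (eventually_arcCode_eq h0 h1)
  obtain ⟨N, hN⟩ := hX.exists_phase_insert hyX h hK0 hK (half_pos hε) hm
  obtain ⟨n, hn, hnN⟩ := ((hlim.eventually (Metric.ball_mem_nhds β (half_pos hε))).and
    (Filter.eventually_ge_atTop N)).exists
  obtain ⟨r, hr, hXm⟩ := hN (p (φ n)) fun s hs => hpX (φ n) s (Finset.image_subset_image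
    (Finset.Icc_subset_Icc le_rfl (by exact_mod_cast hnN.trans (hφ.id_le n))) hs)
  have hclose : dist (r - β) 0 < ε := by
    rw [Real.dist_0_eq_abs]
    calc |r - β| ≤ |r - p (φ n)| + |p (φ n) - β| := abs_sub_le _ _ _
      _ < ε / 2 + ε / 2 := add_lt_add hr (Metric.mem_ball.1 hn)
      _ = ε := add_halves ε
  rw [hXm, ← hball hclose]
  congr 1
  ring

theorem InitialBlockUnique.exists_ne_arcCode (hX : InitialBlockUnique X L) (hα : Irrational α)
    (hlam : 0 < lam) (β : ℝ) : ∃ m : ℤ, 0 ≤ m ∧ X m ≠ arcCode lam (β + m * α) := by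
  by_contra! hcode
  obtain ⟨j, hj⟩ := exists_fract_add_mul_of_eventually hα α
    ((Filter.eventually_all_finset (Finset.Ico 0 L)).2 fun i _ =>
      eventually_arcCode_add_eq hlam (β + i * α))
  obtain ⟨i, hi0, hiL, hne⟩ := hX (j + 1) (by omega)
  apply hne
  rw [hcode i hi0, hcode _ (by omega), ← (hj i (Finset.mem_Ico.2 ⟨hi0, hiL⟩)).1,
    ← arcCode_add_intCast _ ⌊α + j * α⌋, Int.fract]
  congr 1
  push_cast
  ring

theorem arcCode_sub_eq (h0 : 0 < lam) (h1 : lam < 1) (r : ℝ) :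
    arcCode lam (lam - r) = decide (Int.fract r = 0 ∨ lam < Int.fract r) := by
  have hr0 := Int.fract_nonneg r
  have hr1 := Int.fract_lt_one r
  have hfract : arcCode lam (lam - r) = arcCode lam (lam - Int.fract r) := by
    rw [← arcCode_add_intCast _ ⌊r⌋, Int.fract]
    congr 1
    ring
  rw [hfract]
  by_cases hgt : lam < Int.fract r
  · rw [decide_eq_true (Or.inr hgt), ← arcCode_add_intCast _ 1,
      arcCode_eq_true h0 (by push_cast; linarith) (by push_cast; linarith)]
  by_cases hzero : Int.fract r = 0
  · rw [decide_eq_true (Or.inl hzero), hzero, sub_zero, arcCode_eq_true h0 le_rfl h1]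
  · rw [decide_eq_false (not_or.2 ⟨hzero, hgt⟩), arcCode_eq_false h1 (by linarith)
      (sub_lt_self _ (hr0.lt_of_ne' hzero))]

theorem eq_of_fract_add_mul_eq (hα : Irrational α) {m n : ℕ}
    (h : Int.fract (β + m * α) = Int.fract (β + n * α)) : m = n := by
  obtain ⟨k, hk⟩ := Int.fract_eq_fract.1 h
  have := eq_of_add_mul_eq_intCast (κ := 0) hα (d := m - n) (k := k) (d' := 0) (k' := 0)
    (by push_cast; linarith) (by simp)
  omega

/-- Reflecting the circle turns the left-continuous coding of the arc into the right-continuous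
one; comparing `X` with both shows that both endpoints are visited, and that the two values
seen there coincide. -/
theorem IsCodedOffEndpoints.exists_visits (h : IsCodedOffEndpoints X α lam β)
    (hX : InitialBlockUnique X L) (hα : Irrational α) (h0 : 0 < lam) (h1 : lam < 1) :
    ∃ k₁ k₂ : ℕ, Int.fract (β + k₁ * α) = lam ∧ Int.fract (β + k₂ * α) = 0 ∧ X k₁ = X k₂ := by
  obtain ⟨m, hm, hne⟩ := hX.exists_ne_arcCode hα h0 β
  obtain ⟨m', hm', hne'⟩ := hX.exists_ne_arcCode hα.neg h0 (lam - β)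
  rw [show lam - β + m' * -α = lam - (β + m' * α) by ring, arcCode_sub_eq h0 h1] at hne'
  have hvisit : Int.fract (β + m * α) = lam ∧ X m = false ∨
      Int.fract (β + m * α) = 0 ∧ X m = true := by
    by_cases hlam : Int.fract (β + m * α) = lam
    · rw [arcCode, hlam, decide_eq_true le_rfl] at hne
      exact Or.inl ⟨hlam, Bool.eq_false_of_not_eq_true hne⟩
    · have hzero := not_not.1 fun hzero => hne (h m hm hzero hlam)
      rw [arcCode, hzero, decide_eq_false h0.not_ge] at hne
      exact Or.inr ⟨hzero, Bool.eq_true_of_not_eq_false hne⟩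
  have hvisit' : Int.fract (β + m' * α) = lam ∧ X m' = true ∨
      Int.fract (β + m' * α) = 0 ∧ X m' = false := by
    by_cases hzero : Int.fract (β + m' * α) = 0
    · rw [decide_eq_true (Or.inl hzero)] at hne'
      exact Or.inr ⟨hzero, Bool.eq_false_of_not_eq_true hne'⟩
    · have hlam := not_not.1 fun hlam => hne' (by
        rw [h m' hm' hzero hlam, arcCode, decide_eq_decide]
        exact ⟨fun hle => Or.inr (hle.lt_of_ne' hlam), fun hor => (hor.resolve_left hzero).le⟩)
      rw [hlam, decide_eq_false (not_or.2 ⟨h0.ne', lt_irrefl lam⟩)] at hne'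
      exact Or.inl ⟨hlam, Bool.eq_true_of_not_eq_false hne'⟩
  lift m to ℕ using hm
  lift m' to ℕ using hm'
  rcases hvisit with ⟨hf, hXm⟩ | ⟨hf, hXm⟩ <;> rcases hvisit' with ⟨hf', hXm'⟩ | ⟨hf', hXm'⟩
  · rw [eq_of_fract_add_mul_eq hα (hf.trans hf'.symm), hXm'] at hXm
    exact Bool.noConfusion hXm
  · exact ⟨m, m', hf, hf', hXm.trans hXm'.symm⟩
  · exact ⟨m', m, hf', hf, hXm'.trans hXm.symm⟩
  · rw [eq_of_fract_add_mul_eq hα (hf.trans hf'.symm), hXm'] at hXm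
    exact Bool.noConfusion hXm

theorem coe_eq_coe_iff {t r : ℝ} : (t : UnitAddCircle) = r ↔ ∃ k : ℤ, r + k = t := by
  rw [← sub_eq_zero, ← AddCircle.coe_sub, AddCircle.coe_eq_zero_iff]
  simp only [zsmul_one, eq_sub_iff_add_eq, add_comm r]

theorem coe_mem_image_coe_iff {r : ℝ} {S : Set ℝ} :
    (r : UnitAddCircle) ∈ (fun t : ℝ => (t : UnitAddCircle)) '' S ↔ ∃ k : ℤ, r + k ∈ S := by
  refine ⟨fun ⟨t, ht, htr⟩ => ?_, fun ⟨k, hk⟩ => ⟨r + k, hk, coe_eq_coe_iff.2 ⟨k, rfl⟩⟩⟩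
  obtain ⟨k, rfl⟩ := coe_eq_coe_iff.1 htr
  exact ⟨k, ht⟩

theorem coe_mem_image_Ioo_iff (h0 : 0 ≤ lam) (r : ℝ) :
    (r : UnitAddCircle) ∈ (fun t : ℝ => (t : UnitAddCircle)) '' Ioo (lam - β) (1 - β) ↔
      lam < Int.fract (β + r) := by
  rw [coe_mem_image_coe_iff]
  refine ⟨fun ⟨k, hk, hk'⟩ => ?_, fun h => ⟨-⌊β + r⌋, ?_⟩⟩
  · rw [← Int.fract_add_intCast _ k, Int.fract_eq_self.2 (by constructor <;> linarith)]
    linarith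
  · have := Int.fract_lt_one (β + r)
    rw [Int.fract] at h this
    push_cast
    constructor <;> linarith

theorem coe_mem_image_Icc_iff (h0 : 0 ≤ lam) (h1 : lam ≤ 1) (r : ℝ) :
    (r : UnitAddCircle) ∈ (fun t : ℝ => (t : UnitAddCircle)) '' Icc (lam - β) (1 - β) ↔
      lam ≤ Int.fract (β + r) ∨ Int.fract (β + r) = 0 := by
  rw [coe_mem_image_coe_iff]
  constructor
  · rintro ⟨k, hk, hk'⟩
    rw [← Int.fract_add_intCast _ k]
    rcases hk'.eq_or_lt with heq | hlt
    · exact Or.inr (by rw [show β + r + k = 1 by linarith, Int.fract_one])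
    · rw [Int.fract_eq_self.2 (by constructor <;> linarith)]
      exact Or.inl (by linarith)
  · have := Int.fract_lt_one (β + r)
    rintro (h | h) <;> rw [Int.fract] at h
    · refine ⟨-⌊β + r⌋, ?_⟩
      rw [Int.fract] at this
      push_cast
      constructor <;> linarith
    · refine ⟨1 - ⌊β + r⌋, ?_⟩
      push_cast
      constructor <;> linarith

/-- `X` is the coding of the orbit of `0` under the rotation by `α` of the set `I`. -/
def IsArcCoding (X : ℤ → Bool) (α : ℝ) (I : Set UnitAddCircle) : Prop :=
  ∀ n : ℕ, X n = true ↔ ((n * α : ℝ) : UnitAddCircle) ∈ I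

theorem IsCodedOffEndpoints.isArcCoding_Ioo (h : IsCodedOffEndpoints X α lam β) (h0 : 0 < lam)
    (hX : ∀ n : ℕ, Int.fract (β + n * α) = lam ∨ Int.fract (β + n * α) = 0 → X n = false) :
    IsArcCoding X α ((fun t : ℝ => (t : UnitAddCircle)) '' Ioo (lam - β) (1 - β)) := by
  intro n
  rw [coe_mem_image_Ioo_iff h0.le]
  by_cases hn : Int.fract (β + n * α) = lam ∨ Int.fract (β + n * α) = 0
  · rw [hX n hn]
    refine iff_of_false Bool.false_ne_true ?_
    rcases hn with hn | hn <;> rw [hn]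
    exacts [lt_irrefl lam, h0.not_gt]
  · rw [not_or] at hn
    rw [h n n.cast_nonneg hn.2 hn.1, arcCode, Int.cast_natCast, decide_eq_true_iff]
    exact ⟨fun hle => hle.lt_of_ne' hn.1, le_of_lt⟩

theorem IsCodedOffEndpoints.isArcCoding_Icc (h : IsCodedOffEndpoints X α lam β) (h0 : 0 < lam)
    (h1 : lam < 1)
    (hX : ∀ n : ℕ, Int.fract (β + n * α) = lam ∨ Int.fract (β + n * α) = 0 → X n = true) :
    IsArcCoding X α ((fun t : ℝ => (t : UnitAddCircle)) '' Icc (lam - β) (1 - β)) := by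
  intro n
  rw [coe_mem_image_Icc_iff h0.le h1.le]
  by_cases hn : Int.fract (β + n * α) = lam ∨ Int.fract (β + n * α) = 0
  · exact iff_of_true (hX n hn) (hn.imp_left ge_of_eq)
  · rw [not_or] at hn
    rw [h n n.cast_nonneg hn.2 hn.1, arcCode, Int.cast_natCast, decide_eq_true_iff,
      or_iff_left hn.2]

theorem OneSidedWindowBound.exists_isArcCoding (hX : OneSidedWindowBound X)
    (hyX : OccursLateIn y X) (h : IsRotationCoding y α lam κ) (hL : InitialBlockUnique X L) :
    ∃ k₁ k₂ : ℕ, k₁ ≠ k₂ ∧ ∃ a b : ℝ, (a : UnitAddCircle) = ((k₁ * α : ℝ) : UnitAddCircle) ∧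
      (b : UnitAddCircle) = ((k₂ * α : ℝ) : UnitAddCircle) ∧ a < b ∧ b - a ≤ 1 ∧
      (IsArcCoding X α ((fun t : ℝ => (t : UnitAddCircle)) '' Ioo a b) ∨
        IsArcCoding X α ((fun t : ℝ => (t : UnitAddCircle)) '' Icc a b)) := by
  obtain ⟨β, hβ⟩ := hX.exists_isCodedOffEndpoints hyX h
  obtain ⟨k₁, k₂, hk₁, hk₂, hXk⟩ := hβ.exists_visits hL h.irrational h.pos h.lt_one
  have hends : ∀ b, X k₁ = b → ∀ n : ℕ,
      Int.fract (β + n * α) = lam ∨ Int.fract (β + n * α) = 0 → X n = b := by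
    rintro b hb n (hn | hn)
    · rwa [eq_of_fract_add_mul_eq h.irrational (hn.trans hk₁.symm)]
    · rwa [eq_of_fract_add_mul_eq h.irrational (hn.trans hk₂.symm), ← hXk]
  have hcoe : ∀ {k : ℕ} {c : ℝ}, Int.fract (β + k * α) = Int.fract c →
      ((c - β : ℝ) : UnitAddCircle) = ((k * α : ℝ) : UnitAddCircle) := fun {k c} hc => by
    obtain ⟨j, hj⟩ := Int.fract_eq_fract.1 hc.symm
    exact coe_eq_coe_iff.2 ⟨j, by rw [← hj]; ring⟩
  refine ⟨k₁, k₂, ?_, lam - β, 1 - β,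
    hcoe (hk₁.trans (Int.fract_eq_self.2 ⟨h.pos.le, h.lt_one⟩).symm),
    hcoe (hk₂.trans Int.fract_one.symm), by linarith [h.lt_one], by linarith [h.pos], ?_⟩
  · rintro rfl
    exact h.pos.ne' (hk₁.symm.trans hk₂)
  · cases hb : X k₁
    · exact Or.inl (hβ.isArcCoding_Ioo h.pos (hends _ hb))
    · exact Or.inr (hβ.isArcCoding_Icc h.pos h.lt_one (hends _ hb))

end Transfer

/-! ### Periodic and constant residue classes -/

/-- `z` is periodic on the residue class of `i` modulo `t`. -/
def IsPeriodicClass (z : ℤ → Bool) (t i : ℤ) : Prop :=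
  ∃ g : ℤ, 0 < g ∧ t ∣ g ∧ ∀ q : ℤ, t ∣ q - i → z (q + g) = z q

/-- `z` takes the value `b` on the whole residue class of `i` modulo `t`. -/
def IsConstantClass (z : ℤ → Bool) (t i : ℤ) (b : Bool) : Prop :=
  ∀ q : ℤ, t ∣ q - i → z q = b

section ResidueClasses

variable {t T Q i j h c : ℤ} {b : Bool}

theorem IsConstantClass.of_dvd (hc : IsConstantClass z t i b) (htT : t ∣ T) :
    IsConstantClass z T i b :=
  fun q hq => hc q (htT.trans hq)

theorem IsConstantClass.congr (hc : IsConstantClass z t i b) (hij : t ∣ j - i) :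
    IsConstantClass z t j b :=
  fun q hq => hc q (by simpa using dvd_add hq hij)

theorem IsConstantClass.isPeriodicClass (hc : IsConstantClass z t i b) (ht : 0 < t) :
    IsPeriodicClass z t i :=
  ⟨t, ht, dvd_rfl, fun q hq => by
    rw [hc q hq, hc (q + t) (by rw [add_sub_right_comm]; exact dvd_add hq dvd_rfl)]⟩

theorem IsPeriodicClass.exists_forall_add_mul (hp : IsPeriodicClass z t i) :
    ∃ g : ℤ, 0 < g ∧ t ∣ g ∧ ∀ q : ℤ, t ∣ q - i → ∀ k : ℤ, z (q + k * g) = z q := by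
  obtain ⟨g, hg, htg, hper⟩ := hp
  refine ⟨g, hg, htg, fun q hq k => ?_⟩
  have hstep : Function.Periodic (fun k : ℤ => z (q + k * g)) 1 := fun k => by
    have hqk := hper (q + k * g) (by rw [add_sub_right_comm]; exact dvd_add hq (htg.mul_left k))
    exact (congrArg z (by ring)).trans hqk
  simpa using hstep.int_mul_eq k

theorem IsPeriodicClass.of_dvd (hp : IsPeriodicClass z t i) (hT : 0 < T) (htT : t ∣ T) :
    IsPeriodicClass z T i := by
  obtain ⟨g, hg, -, hper⟩ := hp.exists_forall_add_mul
  exact ⟨T * g, by positivity, dvd_mul_right T g, fun q hq => hper q (htT.trans hq) T⟩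

theorem exists_common_period (hT : 0 < T) {S : ℤ → Prop} (hS : ∀ q, S q → IsPeriodicClass z T q) :
    ∃ P : ℤ, 0 < P ∧ T ∣ P ∧ ∀ q, S q → ∀ k : ℤ, z (q + k * P) = z q := by
  have hper : ∀ r : ℤ, ∃ g, 0 < g ∧ ∀ q, S q → q % T = r → ∀ k : ℤ, z (q + k * g) = z q := by
    intro r
    by_cases hr : ∃ p, S p ∧ p % T = r
    · obtain ⟨p, hp, rfl⟩ := hr
      obtain ⟨g, hg, -, hgz⟩ := (hS p hp).exists_forall_add_mul
      exact ⟨g, hg, fun q _ hq => hgz q (Int.ModEq.dvd hq.symm)⟩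
    · exact ⟨1, one_pos, fun q hq hqr => (hr ⟨q, hq, hqr⟩).elim⟩
  choose g hg hgz using hper
  refine ⟨T * ∏ r ∈ Finset.Ico 0 T, g r, mul_pos hT (Finset.prod_pos fun r _ => hg r),
    dvd_mul_right _ _, fun q hq k => ?_⟩
  have hr : q % T ∈ Finset.Ico 0 T :=
    Finset.mem_Ico.2 ⟨Int.emod_nonneg _ hT.ne', Int.emod_lt_of_pos _ hT⟩
  obtain ⟨c, hc⟩ := ((Finset.dvd_prod_of_mem g hr).mul_left T).mul_left k
  rw [hc, mul_comm, hgz _ q hq rfl]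

theorem isPeriodicClass_of_forall (hT : 0 < T) (htT : t ∣ T)
    (hS : ∀ i, t ∣ i - h → IsPeriodicClass z T i) : IsPeriodicClass z t h := by
  obtain ⟨P, hP, hTP, hPz⟩ := exists_common_period hT hS
  exact ⟨P, hP, htT.trans hTP, fun q hq => by simpa using hPz q hq 1⟩

theorem exists_eq_and_add_eq_not (hz : TotallyUniformlyRecurrent z)
    (hi : ¬ IsPeriodicClass z t i) {g : ℤ} (hg : 0 < g) (htg : t ∣ g) (c : Bool) :
    ∃ q : ℤ, t ∣ q - i ∧ z q = c ∧ z (q + g) = !c := by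
  obtain ⟨q, hq, hne⟩ : ∃ q : ℤ, t ∣ q - i ∧ z (q + g) ≠ z q := by
    by_contra! hper
    exact hi ⟨g, hg, htg, hper⟩
  by_cases hc : z q = c
  · exact ⟨q, hq, hc, hc ▸ Bool.eq_not.2 hne⟩
  have hqg : z (q + g) = c := (Bool.eq_not.2 hne).trans (Bool.eq_not.2 (Ne.symm hc)).symm
  obtain ⟨G, -, hret⟩ := hz g hg |q|
  obtain ⟨_, hle, -, ⟨w, rfl⟩, hw⟩ := hret g
  have hw1 : 1 ≤ w := le_of_mul_le_mul_left (by simpa using hle) hg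
  obtain ⟨l, -, hl, hl'⟩ := exists_lt_forall_le_not_succ (c := (w - 1).toNat)
    (P := fun l : ℕ => z (q + g + l * g) = c) (by simpa using hqg) (by
      rw [Int.toNat_of_nonneg (by omega), show q + g + (w - 1) * g = q + g * w by ring,
        hw q le_rfl]
      exact hc)
  refine ⟨q + g + l * g, ?_, hl l le_rfl, Bool.eq_not.2 fun h => hl' ?_⟩
  · rw [show q + g + l * g - i = (q - i) + (1 + l) * g by ring]
    exact dvd_add hq (htg.mul_left _)
  · exact (congrArg z (by push_cast; ring)).trans h

theorem isConstantClass_congr (hij : t ∣ j - i) :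
    IsConstantClass z t j b ↔ IsConstantClass z t i b :=
  ⟨fun h => h.congr (dvd_sub_comm.1 hij), fun h => h.congr hij⟩

theorem TotallyUniformlyRecurrent.exists_window_isConstantClass (hz : TotallyUniformlyRecurrent z)
    (hQ : 0 < Q) : ∃ R : ℤ, 0 < R ∧ ∀ m m' : ℤ, (∀ s ∈ Finset.Ico 0 R, z (m + s) = z (m' + s)) →
      ∀ i b, IsConstantClass z Q (i + (m - m')) b → IsConstantClass z Q i b := by
  obtain ⟨K, hK⟩ := hz.exists_bounded_occurrence hQ
  refine ⟨Q * (K + 1), by positivity, fun m m' hmm i b hc => ?_⟩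
  have hr0 := Int.emod_nonneg (i - m') hQ.ne'
  have hrQ := Int.emod_lt_of_pos (i - m') hQ
  have hr : Q ∣ (i - m') - (i - m') % Q := Int.dvd_self_sub_emod
  set r := (i - m') % Q
  have hmr : IsConstantClass z Q (m + r) b := hc.congr <| by
    rw [← dvd_neg, show -(m + r - (i + (m - m'))) = i - m' - r by ring]
    exact hr
  refine (isConstantClass_congr (j := i) (i := m' + r) (by rwa [← sub_sub])).2 fun q hq => ?_
  obtain ⟨k, hk, hkz⟩ := hK (m' + r) q (dvd_sub_comm.1 hq)
  have hkQ : (k : ℤ) * Q ≤ K * Q := by gcongr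
  rw [← hkz, add_assoc, ← hmm _ (Finset.mem_Ico.2 ⟨by positivity, by linarith⟩), ← add_assoc]
  exact hmr _ (by simp)

/-- The modulus `t` is the period of the constancy pattern of the classes modulo `Q`; a long enough
window sees that pattern and therefore determines the position modulo `t`. -/
theorem TotallyUniformlyRecurrent.exists_clock (hz : TotallyUniformlyRecurrent z) (hQ : 0 < Q) :
    ∃ t : ℤ, 0 < t ∧ t ∣ Q ∧ (∀ i b, IsConstantClass z Q i b → IsConstantClass z t i b) ∧
      ∃ R : ℤ, 0 < R ∧ ∀ m m' : ℤ, (∀ s ∈ Finset.Ico 0 R, z (m + s) = z (m' + s)) →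
        t ∣ m - m' := by
  let H : AddSubgroup ℤ :=
    { carrier := {d | ∀ i b, IsConstantClass z Q (i + d) b ↔ IsConstantClass z Q i b}
      zero_mem' := fun i b => by rw [add_zero]
      add_mem' := fun ha hb i b => by rw [← add_assoc, hb, ha]
      neg_mem' := fun {a} ha i b => by rw [← ha (i + -a), neg_add_cancel_right] }
  have hQH : Q ∈ H := fun i b => isConstantClass_congr (by simp)
  obtain ⟨a, ha⟩ := Int.subgroup_cyclic H
  have hmem : ∀ d, d ∈ H ↔ a ∣ d := fun d => by
    rw [ha, ← AddSubgroup.zmultiples_eq_closure, Int.mem_zmultiples_iff]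
  have ha0 : a ≠ 0 := by
    rintro rfl
    exact hQ.ne' (zero_dvd_iff.1 ((hmem Q).1 hQH))
  refine ⟨|a|, abs_pos.2 ha0, (abs_dvd _ _).2 ((hmem Q).1 hQH), fun i b hb q hq => ?_, ?_⟩
  · have := (hmem (q - i)).2 ((abs_dvd _ _).1 hq) i b
    rw [add_sub_cancel] at this
    exact this.2 hb q (by simp)
  obtain ⟨R, hR, hRz⟩ := hz.exists_window_isConstantClass hQ
  refine ⟨R, hR, fun m m' hmm => (abs_dvd _ _).2 ((hmem _).1 fun i b => ⟨hRz m m' hmm i b, ?_⟩)⟩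
  have := hRz m' m (fun s hs => (hmm s hs).symm) (i + (m - m')) b
  rwa [add_assoc, sub_add_sub_cancel, sub_self, add_zero] at this

theorem TotallyUniformlyRecurrent.exists_separated_seq (hz : TotallyUniformlyRecurrent z)
    (ht : 0 < t) {κ : Bool → ℤ} (hκ : ∀ a, ¬ IsPeriodicClass z t (κ a)) :
    ∃ (g : ℕ → ℤ) (q : ℕ → Bool → Bool → ℤ),
      (∀ n a c, t ∣ q n a c - κ a ∧ z (q n a c) = c ∧ z (q n a c + g n) = !c) ∧
        ∀ m n, m < n → ∀ a c, z (q m a c + g n) = z (q m a c) := by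
  obtain ⟨f, hf, hlt⟩ := exists_seq_of_forall_finset_exists
    (fun p : ℤ × (Bool → Bool → ℤ) => ∀ a c, t ∣ p.2 a c - κ a ∧ z (p.2 a c) = c ∧
      z (p.2 a c + p.1) = !c)
    (fun p p' => ∀ a c, z (p.2 a c + p'.1) = z (p.2 a c)) fun s _ => by
      obtain ⟨R, -, hR⟩ := exists_forall_mem_abs_le (s ×ˢ (Finset.univ : Finset (Bool × Bool)))
        fun o => o.1.2 o.2.1 o.2.2
      obtain ⟨G, -, hret⟩ := hz t ht R
      obtain ⟨g, hg, -, htg, hgz⟩ := hret 1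
      choose q hq using fun a c => exists_eq_and_add_eq_not hz (hκ a) (by omega) htg c
      exact ⟨(g, q), hq, fun p hp a c =>
        hgz _ (hR (p, a, c) (Finset.mk_mem_product hp (Finset.mem_univ _)))⟩
  exact ⟨fun n => (f n).1, fun n => (f n).2, hf, hlt⟩

theorem TotallyUniformlyRecurrent.exists_separated_positions (hz : TotallyUniformlyRecurrent z)
    (ht : 0 < t) {κ : Bool → ℤ} (hκ : ∀ a, ¬ IsPeriodicClass z t (κ a)) (n : ℕ) :
    ∃ (τ : Finset ℤ) (f : Bool → Bool × Fin n → ℤ), τ.card ≤ n + 1 ∧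
      (∀ a o, t ∣ f a o - κ a) ∧
      ∀ a, Pairwise fun o o' => ∃ s ∈ τ, z (f a o + s) ≠ z (f a o' + s) := by
  obtain ⟨g, q, hq, hgq⟩ := hz.exists_separated_seq ht hκ
  have hlater : ∀ (a c : Bool) (m m' : Fin n), m < m' →
      ∃ s ∈ insert 0 ((Finset.range n).image g), z (q m a c + s) ≠ z (q m' a c + s) := by
    refine fun a c m m' hm => ⟨g m', Finset.mem_insert_of_mem
      (Finset.mem_image_of_mem g (Finset.mem_range.2 m'.2)), ?_⟩
    rw [hgq m m' hm, (hq m' a c).2.2, (hq m a c).2.1]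
    exact (Bool.not_ne_self c).symm
  refine ⟨insert 0 ((Finset.range n).image g), fun a o => q o.2 a o.1, ?_,
    fun a o => (hq o.2 a o.1).1, ?_⟩
  · exact (Finset.card_insert_le _ _).trans
      (Nat.succ_le_succ (Finset.card_image_le.trans (Finset.card_range n).le))
  rintro a ⟨c, m⟩ ⟨c', m'⟩ hne
  by_cases hc : c = c'
  · subst hc
    rcases lt_trichotomy m m' with hm | rfl | hm
    · exact hlater a c m m' hm
    · exact (hne rfl).elim
    · exact (hlater a c m' m hm).imp fun s hs => ⟨hs.1, hs.2.symm⟩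
  · exact ⟨0, Finset.mem_insert_self _ _, by simpa only [add_zero, (hq _ _ _).2.1] using hc⟩

/-- Two nonperiodic classes would give `4 n` patterns on a window of `n + R + 1` points. -/
theorem WindowBound.dvd_sub_of_not_isPeriodicClass (hW : WindowBound z)
    (hz : TotallyUniformlyRecurrent z) (ht : 0 < t) {R : ℤ} (hR : 0 < R)
    (hclock : ∀ m m' : ℤ, (∀ s ∈ Finset.Ico 0 R, z (m + s) = z (m' + s)) → t ∣ m - m')
    (hi : ¬ IsPeriodicClass z t i) (hj : ¬ IsPeriodicClass z t j) : t ∣ i - j := by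
  by_contra hij
  let κ : Bool → ℤ := fun a => cond a i j
  have hκ : ∀ a a', a ≠ a' → ¬ t ∣ κ a - κ a' := by
    rintro (_ | _) (_ | _) ha
    · exact (ha rfl).elim
    · exact fun h => hij (dvd_sub_comm.1 h)
    · exact hij
    · exact (ha rfl).elim
  obtain ⟨τ, f, hτ, hf, hsep⟩ := hz.exists_separated_positions ht (κ := κ)
    (Bool.forall_bool.2 ⟨hj, hi⟩) (R.toNat + 2)
  have hcard := hW (Bool × Bool × Fin (R.toNat + 2)) (fun o => f o.1 o.2) (τ ∪ Finset.Ico 0 R)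
    ⟨0, Finset.mem_union_right _ (Finset.mem_Ico.2 ⟨le_rfl, hR⟩)⟩ (by
      rintro ⟨a, o⟩ ⟨a', o'⟩ hne
      by_cases ha : a = a'
      · subst ha
        exact (hsep a fun h => hne (congrArg (Prod.mk a) h)).imp fun s hs =>
          ⟨Finset.mem_union_left _ hs.1, hs.2⟩
      · by_contra! hsame
        refine hκ a a' ha ?_
        have hd := hclock _ _ fun s hs => hsame s (Finset.mem_union_right _ hs)
        have := dvd_add (dvd_sub hd (hf a o)) (hf a' o')
        rwa [show f a o - f a' o' - (f a o - κ a) + (f a' o' - κ a') = κ a - κ a' by ring] at this)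
  have hunion := Finset.card_union_le τ (Finset.Ico 0 R)
  simp only [Fintype.card_prod, Fintype.card_bool, Fintype.card_fin, Int.card_Ico,
    sub_zero] at hcard hunion
  omega

/-! ### The tower of holes -/

/-- The class of `h` modulo `t` is a hole of `z`: it is the only class modulo `t` on which `z` is
not periodic. -/
structure IsHole (z : ℤ → Bool) (t h : ℤ) : Prop where
  pos : 0 < t
  not_isPeriodicClass : ¬ IsPeriodicClass z t h
  isPeriodicClass : ∀ i, ¬ t ∣ i - h → IsPeriodicClass z t i

theorem IsHole.exists_next (hh : IsHole z t h) (hz : TotallyUniformlyRecurrent z)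
    (hW : WindowBound z) (htT : t ∣ T) (hT : 0 < T) (hi : t ∣ i - h)
    (hc : IsConstantClass z T i b) :
    ∃ t' h' : ℤ, t ∣ t' ∧ t < t' ∧ t ∣ h' - h ∧ IsHole z t' h' ∧
      (∀ m, ¬ t ∣ m - h → z (m + t') = z m) ∧ IsConstantClass z t' i b := by
  obtain ⟨P, hP, -, hPz⟩ := exists_common_period hh.pos hh.isPeriodicClass
  have hQ : 0 < P * T := by positivity
  obtain ⟨h', hh', hper⟩ : ∃ h', t ∣ h' - h ∧ ¬ IsPeriodicClass z (P * T) h' := by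
    by_contra! hcon
    exact hh.not_isPeriodicClass (isPeriodicClass_of_forall hQ (htT.mul_left P) hcon)
  obtain ⟨t', ht', htQ, hconst, R, hR, hclock⟩ := hz.exists_clock hQ
  have hoff : ∀ m, ¬ t ∣ m - h → IsConstantClass z t' m (z m) := fun m hm =>
    hconst m _ fun q ⟨k, hk⟩ => by
      rw [show q = m + T * k * P by linear_combination hk, hPz m hm]
  have hper' : ¬ IsPeriodicClass z t' h' := fun h => hper (h.of_dvd hQ htQ)
  have hnconst : ∀ j a, t' ∣ h' - j → ¬ IsConstantClass z t' j a := fun j a hj hja =>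
    hper' ((hja.congr hj).isPeriodicClass ht')
  have hconsti : IsConstantClass z t' i b := hconst i b (hc.of_dvd (dvd_mul_left T P))
  have htt' : t ∣ t' := by
    by_contra hdvd
    refine hnconst (h' + t') _ (by simp) (hoff _ fun h => hdvd ?_)
    simpa using dvd_sub h hh'
  refine ⟨t', h', htt', (Int.le_of_dvd ht' htt').lt_of_ne fun heq => ?_, hh', ⟨ht', hper',
    fun j hj => ?_⟩, fun m hm => hoff m hm _ (by simp), hconsti⟩
  · exact hnconst i b (heq ▸ by simpa using dvd_sub hh' hi) hconsti
  · by_contra hcon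
    exact hj (hW.dvd_sub_of_not_isPeriodicClass hz ht' hR hclock hcon hper')

theorem TotallyUniformlyRecurrent.comp_progression (hz : TotallyUniformlyRecurrent z)
    (ht : 0 < t) (h : ℤ) : TotallyUniformlyRecurrent fun j => z (h + t * j) := by
  intro s hs R
  obtain ⟨G, hG, hret⟩ := hz (t * s) (by positivity) (|h| + t * R)
  refine ⟨G, hG, fun a => ?_⟩
  obtain ⟨_, hle, hge, ⟨w, rfl⟩, hw⟩ := hret (t * a)
  have hGt : G ≤ t * G := le_mul_of_one_le_left hG.le ht
  refine ⟨s * w, le_of_mul_le_mul_left (by linarith) ht,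
    le_of_mul_le_mul_left (by linarith) ht, dvd_mul_right s w, fun i hi => ?_⟩
  have hRi : |h + t * i| ≤ |h| + t * R := by
    grw [abs_add_le, abs_mul, abs_of_pos ht, hi]
  exact (congrArg z (by ring)).trans (hw _ hRi)

theorem WindowBound.comp_progression (hW : WindowBound z) (t h : ℤ) :
    WindowBound fun j => z (h + t * j) := by
  intro ι _ f τ hτ hf
  refine (hW ι (fun i => h + t * f i) (τ.image (t * ·)) (hτ.image _) fun i j hij => ?_).trans
    (Nat.mul_le_mul_left _ Finset.card_image_le)
  obtain ⟨s, hs, hne⟩ := hf hij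
  refine ⟨t * s, Finset.mem_image_of_mem _ hs, ?_⟩
  simpa only [add_assoc, ← mul_add] using hne

theorem IsFractDense.exists_arcCode_eq {α ε lam : ℝ} {τ : Finset ℤ} (hτ : IsFractDense α ε τ)
    (h0 : 0 < lam) (h1 : lam < 1) (hε : ε ≤ lam) (hε' : ε ≤ 1 - lam) (p : ℝ) (a : Bool) :
    ∃ s ∈ τ, arcCode lam (p + s * α) = a := by
  obtain ⟨s, hs, hsε⟩ := hτ (p - cond a lam 0)
  refine ⟨s, hs, ?_⟩
  rw [show p + s * α = cond a lam 0 + Int.fract (p - cond a lam 0 + s * α) +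
    (⌊p - cond a lam 0 + s * α⌋ : ℤ) by rw [Int.fract]; ring, arcCode_add_intCast]
  have hnonneg := Int.fract_nonneg (p - cond a lam 0 + s * α)
  cases a <;> simp only [cond_true, cond_false] at hnonneg hsε ⊢
  · exact arcCode_eq_false h1 (by linarith) (by linarith)
  · exact arcCode_eq_true h0 (by linarith) (by linarith)

/-- The patterns of the critical phases exhaust the window bound, and each of them contains both
symbols. -/
theorem WindowBound.not_isConstantClass_of_isRotationCoding (hW : WindowBound z) {y : ℤ → Bool}
    {α lam κ : ℝ} (hy : IsRotationCoding y α lam κ) (hyz : OccursIn y fun j => z (h + t * j)) :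
    ¬ IsConstantClass z t c b := by
  intro hc
  obtain ⟨K, hK0, hK⟩ := exists_forall_abs_eq_of_mul_sub_eq hy.irrational hy.pos hy.lt_one
  obtain ⟨N, hN⟩ := exists_isFractDense_image_mul hy.irrational
    (lt_min hy.pos (sub_pos.2 hy.lt_one)) hK0
  set τ := (Finset.Icc 0 (0 + (N : ℤ))).image (· * (2 * K))
  have hτ : IsFractDense α (min lam (1 - lam)) τ := hN 0
  have hocc : ∀ p : ℝ, ∃ q : ℤ, ∀ s ∈ τ, z (q + t * s) = arcCode lam (p + s * α) := by
    intro p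
    obtain ⟨m, hm⟩ := hy.exists_forall_eq_arcCode p τ
    obtain ⟨R, -, hR⟩ := exists_forall_mem_abs_le τ (m + ·)
    obtain ⟨r, hr⟩ := hyz R
    refine ⟨h + t * (r + m), fun s hs => ?_⟩
    rw [← hm s hs, ← hr _ (hR s hs)]
    exact congrArg z (by ring)
  choose q hq using hocc
  obtain ⟨s₀, hs₀, -⟩ := hτ 0
  obtain ⟨o, ho⟩ := hW.exists_agree (ι := τ × Bool)
    (f := fun o => q (criticalPhase α lam (o.1, o.2))) (τ := τ.image (t * ·))
    ⟨_, Finset.mem_image_of_mem _ hs₀⟩ (fun o o' hoo => by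
      obtain ⟨s, hs, hne⟩ := exists_arcCode_criticalPhase_ne hy.irrational hτ hy.pos hy.lt_one
        (min_le_left _ _) (min_le_right _ _) hK (i := (o.1, o.2)) (j := (o'.1, o'.2)) o.1.2 o'.1.2
        (fun hp => hoo (Prod.ext (Subtype.ext (Prod.ext_iff.1 hp).1) (Prod.ext_iff.1 hp).2)) (by
          obtain ⟨i, -, hi⟩ := Finset.mem_image.1 o.1.2
          obtain ⟨j, -, hj⟩ := Finset.mem_image.1 o'.1.2
          simpa only [← hi, ← hj] using abs_mul_two_mul_sub_ne hK0 i j)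
      exact ⟨t * s, Finset.mem_image_of_mem _ hs, by rwa [hq _ s hs, hq _ s hs]⟩)
    (by
      rw [Fintype.card_prod, Fintype.card_coe, Fintype.card_bool, mul_comm]
      exact Nat.mul_le_mul_right 2 Finset.card_image_le) c
  obtain ⟨s, hs, hsb⟩ := hτ.exists_arcCode_eq hy.pos hy.lt_one (min_le_left _ _)
    (min_le_right _ _) (criticalPhase α lam (o.1, o.2)) (!b)
  have := ho (t * s) (Finset.mem_image_of_mem _ hs)
  rw [hc _ (by simp), hq _ s hs, hsb] at this
  exact Bool.not_ne_self b this.symm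

theorem WindowBound.exists_isConstantClass_progression (hW : WindowBound z)
    (hz : TotallyUniformlyRecurrent z) (ht : 0 < t) (hc : IsConstantClass z t c b) (h : ℤ) :
    ∃ u i a, 0 < u ∧ t ∣ i - h ∧ IsConstantClass z (t * u) i a := by
  by_contra! hcon
  have hNC : NoConstantClass fun j => z (h + t * j) := by
    intro u hu i
    by_contra! hi
    refine hcon u (h + t * i) _ hu (by simp) fun q ⟨k, hk⟩ => (congrArg z ?_).trans (hi k)
    linear_combination hk
  obtain ⟨y, α, lam, κ, hyz, hy⟩ :=
    hNC.exists_isRotationCoding (hz.comp_progression ht h) (hW.comp_progression t h)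
  exact hW.not_isConstantClass_of_isRotationCoding hy hyz hc

end ResidueClasses

/-- A tower of holes: the class of `h j` modulo `t j` is a hole, these classes shrink as `j` grows,
and off the `j`-th hole `z` has period `t (j + 1)`. -/
structure IsHoleTower (z : ℤ → Bool) (t h : ℕ → ℤ) : Prop where
  isHole : ∀ j, IsHole z (t j) (h j)
  dvd : ∀ j, t j ∣ t (j + 1)
  lt : ∀ j, t j < t (j + 1)
  dvd_hole_sub : ∀ j, t j ∣ h (j + 1) - h j
  add_eq : ∀ j m, ¬ t j ∣ m - h j → z (m + t (j + 1)) = z m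

theorem WindowBound.exists_isHoleTower (hW : WindowBound z) (hz : TotallyUniformlyRecurrent z)
    (hper : ∀ g : ℤ, 0 < g → ¬ Function.Periodic z g) (hNC : ¬ NoConstantClass z) :
    ∃ t h : ℕ → ℤ, IsHoleTower z t h := by
  unfold NoConstantClass at hNC
  push Not at hNC
  obtain ⟨u, hu, i, hi⟩ := hNC
  have hhole : IsHole z 1 0 := ⟨one_pos, fun ⟨g, hg, _, hgz⟩ =>
    hper g hg fun q => hgz q (one_dvd _), fun _ hi => absurd (one_dvd _) hi⟩
  obtain ⟨t₀, h₀, -, -, -, hhole₀, -, hconst₀⟩ := hhole.exists_next hz hW (one_dvd u) hu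
    (one_dvd (i - 0)) (b := z i) fun q ⟨k, hk⟩ =>
      (congrArg z (by linear_combination hk)).trans (hi k)
  let S := {p : ℤ × ℤ // IsHole z p.1 p.2 ∧ ∃ c b, IsConstantClass z p.1 c b}
  have hstep : ∀ p : S, ∃ q : S, p.1.1 ∣ q.1.1 ∧ p.1.1 < q.1.1 ∧ p.1.1 ∣ q.1.2 - p.1.2 ∧
      ∀ m, ¬ p.1.1 ∣ m - p.1.2 → z (m + q.1.1) = z m := by
    rintro ⟨⟨t, h⟩, hh, c, b, hc⟩
    obtain ⟨u, i, a, hu, hi, hia⟩ := hW.exists_isConstantClass_progression hz hh.pos hc h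
    obtain ⟨t', h', hdvd, hlt, hsub, hh', hadd, hc'⟩ :=
      hh.exists_next hz hW (dvd_mul_right t u) (mul_pos hh.pos hu) hi hia
    exact ⟨⟨(t', h'), hh', i, a, hc'⟩, hdvd, hlt, hsub, hadd⟩
  choose next hdvd hlt hsub hadd using hstep
  let p : ℕ → S := fun n => next^[n] ⟨(t₀, h₀), hhole₀, i, z i, hconst₀⟩
  have hp : ∀ j, p (j + 1) = next (p j) := fun j => Function.iterate_succ_apply' next j _
  exact ⟨fun n => (p n).1.1, fun n => (p n).1.2, fun j => (p j).2.1, fun j => hp j ▸ hdvd _,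
    fun j => hp j ▸ hlt _, fun j => hp j ▸ hsub _, fun j => hp j ▸ hadd _⟩

namespace IsHoleTower

variable {t h : ℕ → ℤ} {j k l : ℕ} {m d s : ℤ} {b : Bool}

theorem dvd_of_le (hT : IsHoleTower z t h) (hjk : j ≤ k) : t j ∣ t k := by
  induction k, hjk using Nat.le_induction with
  | base => exact dvd_rfl
  | succ k _ ih => exact ih.trans (hT.dvd k)

theorem dvd_hole_sub_of_le (hT : IsHoleTower z t h) (hjk : j ≤ k) : t j ∣ h k - h j := by
  induction k, hjk using Nat.le_induction with
  | base => simp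
  | succ k hk ih => simpa using dvd_add ((hT.dvd_of_le hk).trans (hT.dvd_hole_sub k)) ih

theorem natCast_lt (hT : IsHoleTower z t h) (j : ℕ) : (j : ℤ) < t j := by
  induction j with
  | zero => exact_mod_cast (hT.isHole 0).pos
  | succ j ih =>
    have := hT.lt j
    push_cast
    omega

theorem add_eq_of_dvd (hT : IsHoleTower z t h) (hm : ¬ t j ∣ m - h j) (hd : t (j + 1) ∣ d) :
    z (m + d) = z m := by
  obtain ⟨c, rfl⟩ := hd
  have hper : Function.Periodic (fun i => z (m + i * t (j + 1))) 1 := fun i => by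
    have hmi : ¬ t j ∣ m + i * t (j + 1) - h j := fun hc => hm <| by
      simpa [add_sub_right_comm] using dvd_sub hc ((hT.dvd j).mul_left i)
    exact (congrArg z (by ring)).trans (hT.add_eq j _ hmi)
  simpa [mul_comm] using hper.int_mul c 0

theorem exists_eq_and_not_dvd_sub (hT : IsHoleTower z t h) (hz : TotallyUniformlyRecurrent z)
    (j : ℕ) : ∃ k₀ : ℕ, ∀ k, k₀ ≤ k → ∀ b, ∃ m : ℤ, t j ∣ m - h j ∧ ¬ t k ∣ m - h k ∧ z m = b := by
  have hpos := (hT.isHole j).pos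
  obtain ⟨K, hK⟩ := hz.exists_bounded_occurrence hpos
  refine ⟨((K + 1) * t j).toNat, fun k hk b => ?_⟩
  obtain ⟨q, hq, hqb, -⟩ :=
    exists_eq_and_add_eq_not hz (hT.isHole j).not_isPeriodicClass hpos dvd_rfl b
  by_cases hqk : t k ∣ q - h k
  · obtain ⟨w, hw, hwz⟩ := hK (q + t j) q (by simp)
    refine ⟨q + t j + w * t j, ?_, fun hc => ?_, hwz.trans hqb⟩
    · exact (dvd_add hq (dvd_mul_left (t j) (w + 1))).trans (dvd_of_eq (by ring))
    · have hdvd : t k ∣ (w + 1) * t j := (dvd_sub hc hqk).trans (dvd_of_eq (by ring))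
      have hle := Int.le_of_dvd (by positivity) hdvd
      have hwK : (w + 1) * t j ≤ (K + 1) * t j := by gcongr
      have := hT.natCast_lt k
      omega
  · exact ⟨q, hq, hqk, hqb⟩

theorem exists_shift (hT : IsHoleTower z t h) (hz : TotallyUniformlyRecurrent z) (j : ℕ) :
    ∃ k, j ≤ k ∧ ∀ (r : ℤ) (b : Bool), ∃ d, r ≤ d ∧ d < r + t (k + 1) ∧ t (j + 1) ∣ d ∧
      ¬ t k ∣ d ∧ ∀ m, t (k + 1) ∣ m - h (k + 1) → z (m + d) = b := by
  obtain ⟨k₀, hk₀⟩ := hT.exists_eq_and_not_dvd_sub hz (j + 1)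
  obtain ⟨k, hk, hjk⟩ : ∃ k, k₀ ≤ k ∧ j + 1 ≤ k := ⟨_, le_max_left _ _, le_max_right _ _⟩
  refine ⟨k, by omega, fun r b => ?_⟩
  obtain ⟨q, hqj, hqk, hqb⟩ := hk₀ k hk b
  have hpos := (hT.isHole (k + 1)).pos
  obtain ⟨d, hrd, hdr, hd⟩ :
      ∃ d, r ≤ d ∧ d < r + t (k + 1) ∧ t (k + 1) ∣ h (k + 1) + d - q := by
    have h₀ := Int.emod_nonneg (q - h (k + 1) - r) hpos.ne'
    have h₁ := Int.emod_lt_of_pos (q - h (k + 1) - r) hpos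
    refine ⟨r + (q - h (k + 1) - r) % t (k + 1), by omega, by omega, ?_⟩
    exact (dvd_neg.2 (Int.dvd_self_sub_emod (x := q - h (k + 1) - r))).trans
      (dvd_of_eq (by ring))
  refine ⟨d, hrd, hdr, ?_, fun hc => hqk ?_, fun m hm => ?_⟩
  · exact (dvd_add ((hT.dvd_of_le (by omega)).trans hd) (dvd_sub hqj
      (hT.dvd_hole_sub_of_le (by omega : j + 1 ≤ k + 1)))).trans (dvd_of_eq (by ring))
  · exact (dvd_sub (dvd_add (hT.dvd_hole_sub k) hc) ((hT.dvd k).trans hd)).trans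
      (dvd_of_eq (by ring))
  · rw [← hqb, ← hT.add_eq_of_dvd hqk (dvd_add hm hd)]
    congr 1
    ring

theorem not_dvd_sub_of_shift (hT : IsHoleTower z t h) (hd : ¬ t k ∣ d)
    (hm : t (k + 1) ∣ m + d - h (k + 1)) : ¬ t k ∣ m - h k := fun hc =>
  hd ((dvd_add (dvd_sub ((hT.dvd k).trans hm) hc) (hT.dvd_hole_sub k)).trans (dvd_of_eq (by ring)))

theorem eq_of_shift (hT : IsHoleTower z t h) (hd : ¬ t k ∣ d)
    (hm : t (k + 1) ∣ m + d - h (k + 1)) : z m = z (h (k + 1) - d) := by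
  rw [← hT.add_eq_of_dvd (m := h (k + 1) - d) (hT.not_dvd_sub_of_shift hd (by simp)) hm]
  congr 1
  ring

theorem exists_add_eq_of_shift (hT : IsHoleTower z t h) (hz : TotallyUniformlyRecurrent z)
    (hd : ¬ t k ∣ d) (hs : t (k + 1) ∣ s) (b : Bool) :
    ∃ m, z m = z (h (k + 1) - d) ∧ z (m + s) = z (h (k + 1) - d) ∧ z (m + d) = b := by
  have hhole := hT.isHole (k + 1)
  obtain ⟨q, hq, hqb, -⟩ :=
    exists_eq_and_add_eq_not hz hhole.not_isPeriodicClass hhole.pos dvd_rfl b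
  refine ⟨q - d, hT.eq_of_shift hd (by simpa using hq), hT.eq_of_shift hd ?_, by simpa using hqb⟩
  exact (dvd_add hq hs).trans (dvd_of_eq (by ring))

/-- Along the progression `h l + d, h l + 2 d, …` the value changes from `!b` to `b` before `z` can
return to the `l`-th hole. -/
theorem exists_add_eq_not_of_shift (hT : IsHoleTower z t h) (hd : ¬ t k ∣ d)
    (hdb : ∀ m, t (k + 1) ∣ m - h (k + 1) → z (m + d) = !b) (he : z (h (k + 1) - d) = b)
    (hkl : k + 1 ≤ l) (hl : t (k + 1) * |d| < t l) (hs : t (l + 1) ∣ s) :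
    ∃ m, z m = !b ∧ z (m + s) = !b ∧ z (m + d) = b := by
  have hkt := hT.natCast_lt (k + 1)
  have hhl := hT.dvd_hole_sub_of_le hkl
  obtain ⟨n, hn, hnb, hnb'⟩ := exists_lt_forall_le_not_succ (c := (t (k + 1) - 2).toNat)
    (P := fun n : ℕ => z (h l + (n + 1) * d) = !b) (by simpa using hdb (h l) hhl) (by
      rw [← he, ← hT.eq_of_shift (m := h l + (t (k + 1) - 1) * d) hd
        ((dvd_add hhl (dvd_mul_right (t (k + 1)) d)).trans (dvd_of_eq (by ring)))]
      refine ne_of_eq_of_ne (congrArg z ?_) (Bool.eq_not.1 (Bool.not_not _).symm)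
      rw [Int.toNat_of_nonneg (by omega)]
      ring)
  have hnl : ¬ t l ∣ h l + (n + 1) * d - h l := fun hc => by
    have hd₀ : d ≠ 0 := fun h₀ => hd (h₀ ▸ dvd_zero _)
    have hle := Int.le_of_dvd (abs_pos.2 (mul_ne_zero (by omega) hd₀))
      ((dvd_abs _ ((n + 1) * d)).2 (by simpa using hc))
    rw [abs_mul, abs_of_nonneg (by omega)] at hle
    have : (n + 1) * |d| ≤ t (k + 1) * |d| := by
      gcongr
      omega
    omega
  refine ⟨h l + (n + 1) * d, hnb n le_rfl, (hT.add_eq_of_dvd hnl hs).trans (hnb n le_rfl), ?_⟩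
  rw [← Bool.not_not b, Bool.eq_not]
  exact ne_of_eq_of_ne (congrArg z (by push_cast; ring)) hnb'

end IsHoleTower

/-- The three-letter word `a b c` is seen by `X` through the window `{0, s, d}`. -/
def SeesTriple (X : ℤ → Bool) (s d : ℤ) (a b c : Bool) : Prop :=
  ∃ m : ℤ, 0 ≤ m ∧ 0 ≤ m + s ∧ 0 ≤ m + d ∧ X m = a ∧ X (m + s) = b ∧ X (m + d) = c

section ActivePositions

variable {X : ℤ → Bool} {t h : ℕ → ℤ} {j k l : ℕ} {m d s : ℤ} {b : Bool}

theorem OccursLateIn.seesTriple (hz : OccursLateIn z X) (s d m : ℤ) :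
    SeesTriple X s d (z m) (z (m + s)) (z (m + d)) := by
  obtain ⟨r, hr, hrz⟩ := hz (|m| + |s| + |d|) (|m| + |s| + |d|)
  have := abs_nonneg s
  have := abs_nonneg d
  have hms := abs_add_le m s
  have hmd := abs_add_le m d
  have := neg_abs_le m
  have := neg_abs_le (m + s)
  have := neg_abs_le (m + d)
  exact ⟨r + m, by omega, by omega, by omega, hrz m (by omega),
    add_assoc r m s ▸ hrz (m + s) (by omega), add_assoc r m d ▸ hrz (m + d) (by omega)⟩

theorem OneSidedWindowBound.not_seesTriple (hX : OneSidedWindowBound X) (hs : s ≠ 0) (hd : d ≠ 0)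
    (hsd : s ≠ d) {b e : Bool} (hne : ∀ c, SeesTriple X s d c (!c) (!b))
    (heq : ∀ c, SeesTriple X s d c c (!b)) (heq' : ∀ c, SeesTriple X s d c c b) :
    ¬ SeesTriple X s d e (!e) b := by
  intro he
  have hall : ∀ v : {v : Bool × Bool × Bool // v ≠ (!e, e, b)},
      SeesTriple X s d v.1.1 v.1.2.1 v.1.2.2 := by
    rintro ⟨⟨v₁, v₂, v₃⟩, hv⟩
    rcases Bool.eq_or_eq_not v₃ b with rfl | rfl <;> rcases Bool.eq_or_eq_not v₂ v₁ with rfl | rfl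
    · exact heq' v₂
    · rcases Bool.eq_or_eq_not v₁ e with rfl | rfl
      · exact he
      · exact absurd (by simp) hv
    · exact heq v₂
    · exact hne v₁
  have hcard := hX {v : Bool × Bool × Bool // v ≠ (!e, e, b)}
    (fun v x => if x = 0 then v.1.1 else if x = s then v.1.2.1 else v.1.2.2) {0, s, d} (by simp)
    (fun v => ?_) fun v w hvw => ?_
  · have h₇ : ∀ w : Bool × Bool × Bool, Fintype.card {v // v ≠ w} = 7 := by decide
    rw [h₇] at hcard
    have := Finset.card_le_three (a := (0 : ℤ)) (b := s) (c := d)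
    omega
  · obtain ⟨m, h₀, hms, hmd, e₀, es, ed⟩ := hall v
    refine ⟨m, fun x hx => ?_⟩
    simp only [Finset.mem_insert, Finset.mem_singleton] at hx
    rcases hx with rfl | rfl | rfl <;> simp [*, hsd.symm]
  · by_contra! hcon
    refine hvw (Subtype.ext (Prod.ext ?_ (Prod.ext ?_ ?_)))
    · simpa using hcon 0 (by simp)
    · simpa [hs] using hcon s (by simp)
    · simpa [hd, hsd.symm] using hcon d (by simp)

/-- The position `m` of `X` never settles to periodicity along the moduli `t`. -/
def IsActive (X : ℤ → Bool) (t : ℕ → ℤ) (m : ℤ) : Prop :=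
  ∀ k, ∃ s : ℤ, 0 < s ∧ t k ∣ s ∧ X (m + s) ≠ X m

theorem OneSidedWindowBound.eq_not_of_isActive (hX : OneSidedWindowBound X)
    (hzX : OccursLateIn z X) (hz : TotallyUniformlyRecurrent z) (hT : IsHoleTower z t h)
    (hm : 0 ≤ m) (hmd : 0 ≤ m + d) (hact : IsActive X t m) (hd : ¬ t k ∣ d)
    (hdb : ∀ m, t (k + 1) ∣ m - h (k + 1) → z (m + d) = !b) {D : ℤ}
    (hD : ∀ s, t (k + 1) ∣ s → z (D + s) = b) (hDd : z (D + d) = b) : X (m + d) = !b := by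
  obtain ⟨l₀, hl₀⟩ := hT.exists_eq_and_not_dvd_sub hz (k + 1)
  obtain ⟨l, hl, hkl, hdl⟩ : ∃ l, l₀ ≤ l ∧ k + 1 ≤ l ∧ t (k + 1) * |d| < t l := by
    have := hT.natCast_lt (l₀ + (k + 1) + (t (k + 1) * |d|).toNat)
    exact ⟨l₀ + (k + 1) + (t (k + 1) * |d|).toNat, by omega, by omega, by omega⟩
  obtain ⟨s, hs, hsl, hms⟩ := hact (l + 1)
  have hsk : t (k + 1) ∣ s := (hT.dvd_of_le (by omega)).trans hsl
  by_contra hXb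
  have hXb : X (m + d) = b := by simpa using hXb
  have hD₀ : z D = b := by simpa using hD 0 (dvd_zero _)
  have hd₀ : d ≠ 0 := fun h₀ => hd (h₀ ▸ dvd_zero _)
  refine hX.not_seesTriple (b := b) hs.ne' hd₀
    (fun hsd => hd (hsd ▸ (hT.dvd k).trans hsk)) (fun c => ?_) (fun c => ?_) (fun c => ?_)
    ⟨m, hm, by omega, hmd, rfl, Bool.eq_not.2 hms, hXb⟩
  · obtain ⟨q, hq, hqc, hqs⟩ := exists_eq_and_add_eq_not hz (hT.isHole l).not_isPeriodicClass hs
      ((hT.dvd l).trans hsl) c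
    have hqk := dvd_add ((hT.dvd_of_le hkl).trans hq) (hT.dvd_hole_sub_of_le hkl)
    rw [← hqs, ← hdb q (by simpa using hqk), ← hqc]
    exact hzX.seesTriple s d q
  · obtain ⟨q, hqk, hql, hqc⟩ := hl₀ l hl c
    simpa only [hT.add_eq_of_dvd hql hsl, hdb q hqk, hqc] using hzX.seesTriple s d q
  · obtain ⟨q, hq, hqs, hqd⟩ : ∃ q, z q = c ∧ z (q + s) = c ∧ z (q + d) = b := by
      rcases Bool.eq_or_eq_not c (z (h (k + 1) - d)) with rfl | hc
      · exact hT.exists_add_eq_of_shift hz hd hsk b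
      · rcases Bool.eq_or_eq_not c b with rfl | rfl
        · exact ⟨D, hD₀, hD s hsk, hDd⟩
        · exact hT.exists_add_eq_not_of_shift hd hdb (Bool.not_inj hc).symm hkl hdl hsl
    simpa only [hq, hqs, hqd] using hzX.seesTriple s d q

theorem OneSidedWindowBound.exists_dvd_sub_of_isActive (hX : OneSidedWindowBound X)
    (hzX : OccursLateIn z X) (hz : TotallyUniformlyRecurrent z) (hT : IsHoleTower z t h) (j : ℕ) :
    ∃ W : ℤ, ∀ m r : ℤ, 0 ≤ m → 0 ≤ r → IsActive X t m → (∀ i, |i| ≤ W → X (r + i) = z i) →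
      t j ∣ m - r - h j := by
  obtain ⟨k, hjk, hk⟩ := hT.exists_shift hz j
  refine ⟨t (k + 1), fun m r hm hr hact hrz => ?_⟩
  by_contra hD
  obtain ⟨d, hrd, hdr, hjd, hkd, hdb⟩ := hk (r - m) (!z (m - r))
  have hXd : X (m + d) = z (m - r + d) := by
    rw [← hrz _ (abs_le.2 ⟨by omega, by omega⟩)]
    congr 1
    ring
  have hne := hX.eq_not_of_isActive hzX hz hT hm (by omega) hact hkd hdb (D := m - r)
    (fun s hs => hT.add_eq_of_dvd hD ((hT.dvd_of_le (by omega)).trans hs))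
    (hT.add_eq_of_dvd hD hjd)
  rw [hXd, hT.add_eq_of_dvd hD hjd] at hne
  exact Bool.not_ne_self _ hne.symm

theorem OneSidedWindowBound.eq_of_isActive (hX : OneSidedWindowBound X)
    (hzX : OccursLateIn z X) (hz : TotallyUniformlyRecurrent z) (hT : IsHoleTower z t h)
    {m' : ℤ} (hm : 0 ≤ m) (hm' : 0 ≤ m') (hact : IsActive X t m) (hact' : IsActive X t m') :
    m = m' := by
  obtain ⟨W, hW⟩ := hX.exists_dvd_sub_of_isActive hzX hz hT (m - m').natAbs
  obtain ⟨r, hr, hrz⟩ := hzX W 0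
  have hdvd := dvd_sub (hW m r hm hr hact hrz) (hW m' r hm' hr hact' hrz)
  rw [sub_sub_sub_cancel_right, sub_sub_sub_cancel_right] at hdvd
  have hlt := hT.natCast_lt (m - m').natAbs
  rw [Int.natCast_natAbs] at hlt
  exact sub_eq_zero.1 (Int.eq_zero_of_abs_lt_dvd hdvd hlt)

theorem OneSidedWindowBound.exists_add_eq_of_isActive (hX : OneSidedWindowBound X)
    (hzX : OccursLateIn z X) (hz : TotallyUniformlyRecurrent z) (hT : IsHoleTower z t h)
    (hm : 0 ≤ m) (hact : IsActive X t m) (k : ℕ) : ∃ s, 0 < s ∧ t k ∣ s ∧ X (m + s) = X m := by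
  have hhole := hT.isHole k
  obtain ⟨W, hW⟩ := hX.exists_dvd_sub_of_isActive hzX hz hT k
  obtain ⟨q, hq, hqm, -⟩ :=
    exists_eq_and_add_eq_not hz hhole.not_isPeriodicClass hhole.pos dvd_rfl (X m)
  obtain ⟨r, hr, hrz⟩ := hzX (max W |q|) (m + |q| + 1)
  have := neg_abs_le q
  have := abs_nonneg q
  have hD := hW m r hm (by omega) hact fun i hi => hrz i (le_max_of_le_left hi)
  refine ⟨r + q - m, by omega, (dvd_sub hq hD).trans (dvd_of_eq (by ring)), ?_⟩
  rw [add_sub_cancel, hrz q (le_max_right _ _), hqm]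

/-- There is at most one active position; once all other positions of a block have settled, the
block reappears wherever the active one returns to its value. -/
theorem OneSidedWindowBound.not_initialBlockUnique (hX : OneSidedWindowBound X)
    (hzX : OccursLateIn z X) (hz : TotallyUniformlyRecurrent z) (hT : IsHoleTower z t h) (L : ℤ) :
    ¬ InitialBlockUnique X L := by
  have hsettle : ∀ i, ∃ k, ¬ IsActive X t i → ∀ s, 0 < s → t k ∣ s → X (i + s) = X i := by
    intro i
    by_cases hi : IsActive X t i
    · exact ⟨0, fun h => absurd hi h⟩
    · simp only [IsActive, not_forall, not_exists, not_and, not_not] at hi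
      exact hi.imp fun _ hk _ => hk
  choose settle hsettle using hsettle
  let K := (Finset.Ico 0 L).sup settle
  have hK : ∀ i, 0 ≤ i → i < L → settle i ≤ K := fun i hi hiL =>
    Finset.le_sup (Finset.mem_Ico.2 ⟨hi, hiL⟩)
  obtain ⟨s, hs, hsK, hact⟩ :
      ∃ s, 0 < s ∧ t K ∣ s ∧ ∀ i, 0 ≤ i → IsActive X t i → X (i + s) = X i := by
    by_cases hp : ∃ p, 0 ≤ p ∧ IsActive X t p
    · obtain ⟨p, hp, hpact⟩ := hp
      obtain ⟨s, hs, hsK, hps⟩ := hX.exists_add_eq_of_isActive hzX hz hT hp hpact K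
      exact ⟨s, hs, hsK, fun i hi hact => hX.eq_of_isActive hzX hz hT hp hi hpact hact ▸ hps⟩
    · exact ⟨t K, (hT.isHole K).pos, dvd_rfl, fun i hi hact => absurd ⟨i, hi, hact⟩ hp⟩
  intro hL
  obtain ⟨i, hi, hiL, hne⟩ := hL s hs
  refine hne (add_comm s i ▸ Eq.symm ?_)
  by_cases ha : IsActive X t i
  · exact hact i hi ha
  · exact hsettle i ha s hs ((hT.dvd_of_le (hK i hi hiL)).trans hsK)

theorem OneSidedWindowBound.noConstantClass (hX : OneSidedWindowBound X)
    (hzX : OccursLateIn z X) (hz : TotallyUniformlyRecurrent z)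
    (hper : ∀ g : ℤ, 0 < g → ¬ Function.Periodic z g) {L : ℤ} (hL : InitialBlockUnique X L) :
    NoConstantClass z := by
  by_contra hNC
  obtain ⟨t, h, hT⟩ := (hX.windowBound hzX).exists_isHoleTower hz hper hNC
  exact hX.not_initialBlockUnique hzX hz hT L hL

end ActivePositions

end BooleanSequences

theorem isArcCoding_boolExt_iff {x : Seq2} {α : ℝ} {I : Set T1} :
    IsArcCoding (boolExt x) α I ↔ ∀ n : ℕ, x n = 1 ↔ (((n : ℝ) * α : ℝ) : T1) ∈ I := by
  have hbool : ∀ c : Fin 2, finTwoEquiv c = true ↔ c = 1 := by decide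
  simp only [IsArcCoding, boolExt, Int.toNat_natCast, hbool]

/-- a nonrecurrent pattern Sturmian sequence whose orbit closure contains
an infinite minimal subshift is the coding sequence of an open or closed arc whose
endpoints are `k₁α` and `k₂α` (Proposition 5.4 of the paper). -/
theorem stmt15 (x : Seq2) (hnrec : ¬ Recurrent x) (hps : PatternSturmian x)
    (hmin : ∃ Y : Set Seq2, Y ⊆ orbitClosure x ∧ MinimalSubshift Y ∧ Y.Infinite) :
    ∃ (α : ℝ), Irrational α ∧ ∃ (k₁ k₂ : ℕ), k₁ ≠ k₂ ∧ ∃ (I : Set T1) (a b : ℝ),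
      (a : T1) = (((k₁ : ℝ) * α : ℝ) : T1) ∧ (b : T1) = (((k₂ : ℝ) * α : ℝ) : T1) ∧
      a < b ∧ b - a ≤ 1 ∧
      (I = (fun r : ℝ => (r : T1)) '' Set.Ioo a b ∨
       I = (fun r : ℝ => (r : T1)) '' Set.Icc a b) ∧
      ∀ n : ℕ, x n = 1 ↔ (((n : ℝ) * α : ℝ) : T1) ∈ I := by
  obtain ⟨Y, hYx, hY, hinf⟩ := hmin
  have hX := oneSidedWindowBound_of_pstar_le fun n hn => (hps n hn).le
  obtain ⟨L, hL⟩ := exists_initialBlockUnique_of_not_recurrent hnrec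
  obtain ⟨w, hwY, hw⟩ := hY.1.exists_totallyUniformlyRecurrent
  have hz : TotallyUniformlyRecurrent (finTwoEquiv ∘ w) := hw.comp _
  have hzX : OccursLateIn (finTwoEquiv ∘ w) (boolExt x) := (hwY.occursLateIn hYx).comp _
  have hper : ∀ g : ℤ, 0 < g → ¬ Function.Periodic (finTwoEquiv ∘ w) g := fun g hg h =>
    hwY.not_periodic hY hinf hg fun n => finTwoEquiv.injective (h n)
  have hNC := hX.noConstantClass hzX hz hper hL
  obtain ⟨y, α, lam, κ, hyz, hy⟩ := hNC.exists_isRotationCoding hz (hX.windowBound hzX)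
  obtain ⟨k₁, k₂, hk, a, b, ha, hb, hab, hba, hI⟩ :=
    hX.exists_isArcCoding (hzX.trans_occursIn hyz) hy hL
  refine ⟨α, hy.irrational, k₁, k₂, hk, ?_⟩
  rcases hI with hI | hI
  · exact ⟨_, a, b, ha, hb, hab, hba, Or.inl rfl, isArcCoding_boolExt_iff.1 hI⟩
  · exact ⟨_, a, b, ha, hb, hab, hba, Or.inr rfl, isArcCoding_boolExt_iff.1 hI⟩
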